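/- arXiv:0711.1135 — 6 statements merged into one kernel-verified Lean document; each statement's English description precedes it below -/
import Mathlib

section
/- Let Q be a tree quiver and V an indecomposable representation of Q over a field K. Then rkf(V) ≠ 0 if and only if V is isomorphic to the identity representation 𝟙_Q. -/
open Submodule

section Defs

variable {K : Type} [Field K]
variable {Q₀ Q₁ : Type} (tl hd : Q₁ → Q₀)
variable (Vx : Q₀ → Type) [∀ x, AddCommGroup (Vx x)] [∀ x, Module K (Vx x)]
variable (Va : ∀ a : Q₁, Vx (tl a) →ₗ[K] Vx (hd a))

/-- `U` is a subrepresentation of the representation `(Vx, Va)`. -/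
def IsSubrep (U : ∀ x, Submodule K (Vx x)) : Prop :=
  ∀ a : Q₁, (U (tl a)).map (Va a) ≤ U (hd a)

/-- `U` is an epimorphic subrepresentation: `V_a(U_{ta}) = U_{ha}` for every arrow. -/
def IsEpiSub (U : ∀ x, Submodule K (Vx x)) : Prop :=
  ∀ a : Q₁, (U (tl a)).map (Va a) = U (hd a)

/-- `N` is a coclosed subrepresentation: it is a subrepresentation and
`V_a⁻¹(N_{ha}) ⊆ N_{ta}` for every arrow. -/
def IsCoclosedSub (N : ∀ x, Submodule K (Vx x)) : Prop :=
  IsSubrep tl hd Vx Va N ∧ ∀ a : Q₁, (N (hd a)).comap (Va a) ≤ N (tl a)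

/-- `Γ(V)`, the sum of all epimorphic subrepresentations. -/
def Gamma (x : Q₀) : Submodule K (Vx x) :=
  ⨆ U : {U : ∀ y, Submodule K (Vx y) // IsEpiSub tl hd Vx Va U}, U.1 x

/-- `Δ(V)`, the intersection of all coclosed subrepresentations. -/
def Delta (x : Q₀) : Submodule K (Vx x) :=
  ⨅ N : {N : ∀ y, Submodule K (Vx y) // IsCoclosedSub tl hd Vx Va N}, N.1 x

lemma le_gamma {U : ∀ y, Submodule K (Vx y)} (hU : IsEpiSub tl hd Vx Va U) (x : Q₀) :
    U x ≤ Gamma tl hd Vx Va x :=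
  le_iSup (fun (W : {U // IsEpiSub tl hd Vx Va U}) => W.1 x) ⟨U, hU⟩

lemma delta_le {N : ∀ y, Submodule K (Vx y)} (hN : IsCoclosedSub tl hd Vx Va N) (x : Q₀) :
    Delta tl hd Vx Va x ≤ N x :=
  iInf_le (fun (W : {N // IsCoclosedSub tl hd Vx Va N}) => W.1 x) ⟨N, hN⟩

lemma gamma_epi : IsEpiSub tl hd Vx Va (Gamma tl hd Vx Va) := by
  intro a
  apply le_antisymm
  · rw [Gamma, Submodule.map_iSup]
    refine iSup_le fun U => ?_
    rw [U.2 a]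
    exact le_gamma tl hd Vx Va U.2 (hd a)
  · refine iSup_le fun U => ?_
    rw [← U.2 a]
    exact Submodule.map_mono (le_gamma tl hd Vx Va U.2 (tl a))

lemma gamma_subrep : IsSubrep tl hd Vx Va (Gamma tl hd Vx Va) :=
  fun a => le_of_eq (gamma_epi tl hd Vx Va a)

lemma delta_subrep : IsSubrep tl hd Vx Va (Delta tl hd Vx Va) := by
  intro a
  have : ∀ N : {N // IsCoclosedSub tl hd Vx Va N},
      (Delta tl hd Vx Va (tl a)).map (Va a) ≤ N.1 (hd a) :=
    fun N => le_trans (Submodule.map_mono (delta_le tl hd Vx Va N.2 (tl a))) (N.2.1 a)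
  exact le_iInf this

/-- `Γ(V) + Δ(V)` pointwise. -/
abbrev GD (x : Q₀) : Submodule K (Vx x) := Gamma tl hd Vx Va x ⊔ Delta tl hd Vx Va x

/-- `Δ(V)`, seen inside `Γ(V) + Δ(V)`. -/
abbrev rkfDen (x : Q₀) : Submodule K (GD tl hd Vx Va x) :=
  (Delta tl hd Vx Va x).comap (GD tl hd Vx Va x).subtype

/-- The vertex spaces `(Γ(V)_x + Δ(V)_x)/Δ(V)_x` of the global tensor functor. -/
abbrev rkfSpace (x : Q₀) : Type :=
  GD tl hd Vx Va x ⧸ rkfDen tl hd Vx Va x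

lemma gd_mapsTo (a : Q₁) : ∀ v ∈ GD tl hd Vx Va (tl a), Va a v ∈ GD tl hd Vx Va (hd a) := by
  intro v hv
  have : (GD tl hd Vx Va (tl a)).map (Va a) ≤ GD tl hd Vx Va (hd a) := by
    rw [Submodule.map_sup]
    exact sup_le_sup (gamma_subrep tl hd Vx Va a) (delta_subrep tl hd Vx Va a)
  exact this ⟨v, hv, rfl⟩

/-- The arrow maps of the global tensor functor, induced by the `V_a`. -/
def rkfMap (a : Q₁) : rkfSpace tl hd Vx Va (tl a) →ₗ[K] rkfSpace tl hd Vx Va (hd a) :=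
  Submodule.liftQ _
    ((rkfDen tl hd Vx Va (hd a)).mkQ ∘ₗ (Va a).restrict (gd_mapsTo tl hd Vx Va a))
    (by
      intro v hv
      simp only [LinearMap.mem_ker, LinearMap.comp_apply, Submodule.mkQ_apply,
        Submodule.Quotient.mk_eq_zero]
      have hv' : (v : Vx (tl a)) ∈ Delta tl hd Vx Va (tl a) := hv
      show (Va a) (v : Vx (tl a)) ∈ Delta tl hd Vx Va (hd a)
      exact delta_subrep tl hd Vx Va a ⟨(v : Vx (tl a)), hv', rfl⟩)

/-- Isomorphism of quiver representations. -/
def RepIso (Wx : Q₀ → Type) [∀ x, AddCommGroup (Wx x)] [∀ x, Module K (Wx x)]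
    (Wa : ∀ a : Q₁, Wx (tl a) →ₗ[K] Wx (hd a)) : Prop :=
  ∃ φ : ∀ x, Vx x ≃ₗ[K] Wx x, ∀ (a : Q₁) (v : Vx (tl a)), φ (hd a) (Va a v) = Wa a (φ (tl a) v)

end Defs

section Indec

variable {K : Type} [Field K]
variable {Q₀ Q₁ : Type} (tl hd : Q₁ → Q₀)

/-- The zero representation: every vertex space is trivial. -/
def RepZero (Wx : Q₀ → Type) [∀ x, AddCommGroup (Wx x)] [∀ x, Module K (Wx x)] : Prop :=
  ∀ (x : Q₀) (w : Wx x), w = 0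

/-- A representation is indecomposable if it is nonzero and any decomposition of it as a
direct sum of two representations has a zero summand. -/
def Indecomposable (Vx : Q₀ → Type) [∀ x, AddCommGroup (Vx x)] [∀ x, Module K (Vx x)]
    (Va : ∀ a : Q₁, Vx (tl a) →ₗ[K] Vx (hd a)) : Prop :=
  ¬ RepZero (K := K) Vx ∧
  ∀ (Ux Wx : Q₀ → Type) [∀ x, AddCommGroup (Ux x)] [∀ x, Module K (Ux x)]
    [∀ x, AddCommGroup (Wx x)] [∀ x, Module K (Wx x)]
    (Ua : ∀ a : Q₁, Ux (tl a) →ₗ[K] Ux (hd a))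
    (Wa : ∀ a : Q₁, Wx (tl a) →ₗ[K] Wx (hd a)),
    RepIso tl hd Vx Va (fun x => Ux x × Wx x) (fun a => (Ua a).prodMap (Wa a)) →
    RepZero (K := K) Ux ∨ RepZero (K := K) Wx

end Indec

/-- Extension of compatible choices along a connected quiver with `|Q₀| = |Q₁| + 1`. -/
lemma tree_choice {Q₀ Q₁ : Type} [Fintype Q₀] [Fintype Q₁]
    (tl hd : Q₁ → Q₀)
    (hconn : ∀ x y : Q₀, Relation.ReflTransGen
      (fun u v => ∃ a : Q₁, (tl a = u ∧ hd a = v) ∨ (hd a = u ∧ tl a = v)) x y)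
    (htree : Fintype.card Q₀ = Fintype.card Q₁ + 1)
    (F : Q₀ → Type) (R : ∀ a, F (tl a) → F (hd a) → Prop)
    (hne : ∀ x, F x)
    (h1 : ∀ a p, ∃ q, R a p q) (h2 : ∀ a q, ∃ p, R a p q) (x0 : Q₀) (p0 : F x0) :
    ∃ s : ∀ x, F x, s x0 = p0 ∧ ∀ a, R a (s (tl a)) (s (hd a)) := by
  classical
  have key : ∀ n : ℕ, n + 1 ≤ Fintype.card Q₀ → ∃ (S : Finset Q₀) (T : Finset Q₁)
      (s : ∀ x, F x), S.card = n + 1 ∧ T.card = n ∧ x0 ∈ S ∧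
      (∀ a ∈ T, tl a ∈ S ∧ hd a ∈ S) ∧ s x0 = p0 ∧ ∀ a ∈ T, R a (s (tl a)) (s (hd a)) := by
    intro n
    induction n with
    | zero =>
      intro _
      exact ⟨{x0}, ∅, Function.update hne x0 p0, by simp, by simp, by simp, by simp, by simp,
        by simp⟩
    | succ n ih =>
      intro hn
      obtain ⟨S, T, s, hS, hT, hx0, hin, hs0, hR⟩ := ih (by omega)
      have hex : ∃ y, y ∉ S := by
        by_contra! hc
        have : S = Finset.univ := by ext y; simp [hc y]
        rw [this, Finset.card_univ] at hS
        omega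
      obtain ⟨y, hy⟩ := hex
      have hcross : ∃ a, (tl a ∈ S ∧ hd a ∉ S) ∨ (hd a ∈ S ∧ tl a ∉ S) := by
        by_contra! hc
        apply hy
        have hp := hconn x0 y
        clear hy
        induction hp with
        | refl => exact hx0
        | tail _ h ih =>
          obtain ⟨a, ⟨rfl, rfl⟩ | ⟨rfl, rfl⟩⟩ := h
          · exact (hc a).1 ih
          · exact (hc a).2 ih
      obtain ⟨a, ⟨ha, hb⟩ | ⟨ha, hb⟩⟩ := hcross
      · have haT : a ∉ T := fun h => hb (hin a h).2
        obtain ⟨q, hq⟩ := h1 a (s (tl a))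
        have hup : ∀ x ∈ S, Function.update s (hd a) q x = s x := fun x hx =>
          Function.update_of_ne (ne_of_mem_of_not_mem hx hb) _ _
        refine ⟨insert (hd a) S, insert a T, Function.update s (hd a) q, ?_, ?_, ?_, ?_, ?_, ?_⟩
        · rw [Finset.card_insert_of_notMem hb, hS]
        · rw [Finset.card_insert_of_notMem haT, hT]
        · simp [hx0]
        · intro b hbT
          rcases Finset.mem_insert.1 hbT with rfl | hbT
          · simp [ha]
          · simp [hin b hbT]
        · rw [hup _ hx0, hs0]
        · intro b hbT
          rcases Finset.mem_insert.1 hbT with rfl | hbT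
          · rw [hup _ ha, Function.update_self]; exact hq
          · rw [hup _ (hin b hbT).1, hup _ (hin b hbT).2]; exact hR b hbT
      · have haT : a ∉ T := fun h => hb (hin a h).1
        obtain ⟨q, hq⟩ := h2 a (s (hd a))
        have hup : ∀ x ∈ S, Function.update s (tl a) q x = s x := fun x hx =>
          Function.update_of_ne (ne_of_mem_of_not_mem hx hb) _ _
        refine ⟨insert (tl a) S, insert a T, Function.update s (tl a) q, ?_, ?_, ?_, ?_, ?_, ?_⟩
        · rw [Finset.card_insert_of_notMem hb, hS]
        · rw [Finset.card_insert_of_notMem haT, hT]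
        · simp [hx0]
        · intro b hbT
          rcases Finset.mem_insert.1 hbT with rfl | hbT
          · simp [ha]
          · simp [hin b hbT]
        · rw [hup _ hx0, hs0]
        · intro b hbT
          rcases Finset.mem_insert.1 hbT with rfl | hbT
          · rw [hup _ ha, Function.update_self]; exact hq
          · rw [hup _ (hin b hbT).1, hup _ (hin b hbT).2]; exact hR b hbT
  obtain ⟨S, T, s, -, hT, -, -, hs0, hR⟩ := key (Fintype.card Q₁) htree.ge
  have hTu : T = Finset.univ := (Finset.card_eq_iff_eq_univ T).1 hT
  exact ⟨s, hs0, fun a => hR a (by simp [hTu])⟩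

lemma delta_coclosed {K : Type} [Field K] {Q₀ Q₁ : Type} (tl hd : Q₁ → Q₀)
    (Vx : Q₀ → Type) [∀ x, AddCommGroup (Vx x)] [∀ x, Module K (Vx x)]
    (Va : ∀ a : Q₁, Vx (tl a) →ₗ[K] Vx (hd a)) (a : Q₁) (v : Vx (tl a))
    (hv : Va a v ∈ Delta tl hd Vx Va (hd a)) : v ∈ Delta tl hd Vx Va (tl a) := by
  refine (Submodule.mem_iInf _).2 fun N => ?_
  exact N.2.2 a ((Submodule.mem_iInf _).1 hv N)

/-- Compatible vectors and functionals with pairing one split off the identity representation. -/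
lemma split_identity {K : Type} [Field K] {Q₀ Q₁ : Type} (tl hd : Q₁ → Q₀) (x0 : Q₀)
    (Vx : Q₀ → Type) [∀ x, AddCommGroup (Vx x)] [∀ x, Module K (Vx x)]
    (Va : ∀ a : Q₁, Vx (tl a) →ₗ[K] Vx (hd a))
    (hV : Indecomposable tl hd Vx Va)
    (v : ∀ x, Vx x) (hv : ∀ a, Va a (v (tl a)) = v (hd a))
    (f : ∀ x, Vx x →ₗ[K] K) (hf : ∀ a w, f (hd a) (Va a w) = f (tl a) w)
    (hfv : ∀ x, f x (v x) = 1) :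
    RepIso tl hd Vx Va (fun _ => K) (fun _ => LinearMap.id) := by
  let Wx : Q₀ → Type := fun x => LinearMap.ker (f x)
  let Wa : ∀ a, LinearMap.ker (f (tl a)) →ₗ[K] LinearMap.ker (f (hd a)) := fun a =>
    (Va a).restrict (fun w hw => by
      rw [LinearMap.mem_ker] at hw ⊢
      rw [hf, hw])
  let φ : ∀ x, Vx x ≃ₗ[K] (K × LinearMap.ker (f x)) := fun x =>
    { toFun := fun w => (f x w, ⟨w - f x w • v x, by simp [hfv]⟩)
      invFun := fun p => p.1 • v x + p.2.1
      map_add' := fun w w' => by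
        ext
        · simp
        · simp [add_smul]; abel
      map_smul' := fun c w => by
        ext
        · simp
        · simp [smul_sub, mul_smul]
      left_inv := fun w => by simp
      right_inv := fun p => by
        have h := LinearMap.mem_ker.1 p.2.2
        ext
        · simp [hfv, h]
        · simp [hfv, h] }
  rcases hV.2 (fun _ => K) (fun x => LinearMap.ker (f x)) (fun _ => LinearMap.id) Wa
    ⟨φ, fun a w => by
      ext
      · exact hf a w
      · show Va a w - f (hd a) (Va a w) • v (hd a) = Va a (w - f (tl a) w • v (tl a))
        rw [map_sub, map_smul, hf, hv]⟩ with h | h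
  · exact absurd (h x0 1) one_ne_zero
  · refine ⟨fun x => LinearEquiv.ofBijective (f x) ⟨?_, ?_⟩, fun a w => hf a w⟩
    · rw [← LinearMap.ker_eq_bot, Submodule.eq_bot_iff]
      intro w hw
      exact congrArg Subtype.val (h x ⟨w, hw⟩)
    · intro c
      exact ⟨c • v x, by simp [hfv]⟩

/-- on a tree quiver, an indecomposable representation `V` has `rkf(V) ≠ 0`
iff `V` is isomorphic to the identity representation `𝟙_Q`. -/
theorem stmt_12 {K : Type} [Field K] {Q₀ Q₁ : Type} [Fintype Q₀] [Fintype Q₁]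
    (tl hd : Q₁ → Q₀)
    (hconn : ∀ x y : Q₀, Relation.ReflTransGen
      (fun u v => ∃ a : Q₁, (tl a = u ∧ hd a = v) ∨ (hd a = u ∧ tl a = v)) x y)
    (htree : Fintype.card Q₀ = Fintype.card Q₁ + 1)
    (Vx : Q₀ → Type) [∀ x, AddCommGroup (Vx x)] [∀ x, Module K (Vx x)]
    [∀ x, FiniteDimensional K (Vx x)]
    (Va : ∀ a : Q₁, Vx (tl a) →ₗ[K] Vx (hd a))
    (hV : Indecomposable tl hd Vx Va) :
    ¬ RepZero (K := K) (rkfSpace tl hd Vx Va) ↔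
      RepIso tl hd Vx Va (fun _ => K) (fun _ => LinearMap.id) := by
  obtain ⟨x0⟩ : Nonempty Q₀ := Fintype.card_pos_iff.1 (by omega)
  constructor
  · intro hz
    have hex : ∃ x, ∃ g ∈ Gamma tl hd Vx Va x, g ∉ Delta tl hd Vx Va x := by
      by_contra! hc
      apply hz
      intro x w
      obtain ⟨w, rfl⟩ := Submodule.Quotient.mk_surjective _ w
      rw [Submodule.Quotient.mk_eq_zero]
      exact (sup_le (hc x) le_rfl : GD tl hd Vx Va x ≤ _) w.2
    obtain ⟨x, g, hg, hgD⟩ := hex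
    obtain ⟨f0, hf0, hf0D⟩ := Submodule.exists_le_ker_of_notMem hgD
    obtain ⟨s, hs0, hs⟩ := tree_choice tl hd hconn htree
      (fun x => Gamma tl hd Vx Va x) (fun a p q => Va a p.1 = q.1) (fun _ => 0)
      (fun a p => ⟨⟨Va a p.1, gamma_subrep tl hd Vx Va a ⟨_, p.2, rfl⟩⟩, rfl⟩)
      (fun a q => by
        obtain ⟨p, hp, hpq⟩ := (gamma_epi tl hd Vx Va a).ge q.2
        exact ⟨⟨p, hp⟩, hpq⟩) x ⟨g, hg⟩
    obtain ⟨t, ht0, ht⟩ := tree_choice tl hd hconn htree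
      (fun x => {f : Vx x →ₗ[K] K // Delta tl hd Vx Va x ≤ LinearMap.ker f})
      (fun a p q => ∀ w, q.1 (Va a w) = p.1 w) (fun _ => ⟨0, by simp⟩)
      (fun a p => by
        let A := (Delta tl hd Vx Va (hd a)).mkQ ∘ₗ Va a
        have hm : p.1 ∈ LinearMap.range A.dualMap := by
          rw [LinearMap.range_dualMap_eq_dualAnnihilator_ker, Submodule.mem_dualAnnihilator]
          intro w hw
          apply p.2
          apply delta_coclosed
          simpa [A] using hw
        obtain ⟨h, hh⟩ := hm
        refine ⟨⟨h ∘ₗ (Delta tl hd Vx Va (hd a)).mkQ, ?_⟩, fun w => ?_⟩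
        · intro w hw
          have : (Delta tl hd Vx Va (hd a)).mkQ w = 0 := by simpa using hw
          rw [LinearMap.mem_ker, LinearMap.comp_apply, this, map_zero]
        · rw [← hh]; rfl)
      (fun a q => ⟨⟨q.1 ∘ₗ Va a, fun w hw =>
        q.2 (delta_subrep tl hd Vx Va a ⟨w, hw, rfl⟩)⟩, fun w => rfl⟩)
      x ⟨(f0 g)⁻¹ • f0, fun w hw => by
        have : f0 w = 0 := hf0D hw
        simp [this]⟩
    refine split_identity tl hd x0 Vx Va hV (fun x => (s x).1) hs (fun x => (t x).1) ht ?_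
    intro y
    induction hconn x y with
    | refl => rw [ht0, hs0]; simp [hf0]
    | tail _ h ih =>
      obtain ⟨a, ⟨rfl, rfl⟩ | ⟨rfl, rfl⟩⟩ := h
      · rw [← hs a, ht a]; exact ih
      · rw [← hs a, ht a] at ih; exact ih
  · rintro ⟨φ, hφ⟩ hz
    have hb : ∀ a, Function.Bijective (Va a) := by
      intro a
      constructor
      · intro v w hvw
        apply (φ (tl a)).injective
        have h1 := hφ a v
        rw [hvw, hφ a w] at h1
        exact h1.symm
      · intro w
        refine ⟨(φ (tl a)).symm (φ (hd a) w), (φ (hd a)).injective ?_⟩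
        rw [hφ]; simp
    have hG : ∀ v, v ∈ Gamma tl hd Vx Va x0 := fun v =>
      le_gamma tl hd Vx Va (U := fun _ => ⊤) (fun a => by
        rw [Submodule.map_top, LinearMap.range_eq_top]; exact (hb a).2) x0 trivial
    have hD := delta_le tl hd Vx Va (N := fun _ => ⊥) ⟨fun a => by simp, fun a => by
        intro w hw
        exact (hb a).1 (by simpa using hw)⟩ x0
    have h := hz x0 (Submodule.Quotient.mk ⟨(φ x0).symm 1, Submodule.mem_sup_left (hG _)⟩)
    rw [Submodule.Quotient.mk_eq_zero] at h
    have h2 : (φ x0).symm 1 = 0 := by simpa using hD h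
    simp at h2
end

section
/- Let Q be a tree quiver and V any representation of Q over a field K. Then rkf(V) is isomorphic to a direct sum of copies of the identity representation 𝟙_Q, and rkf(V) is isomorphic to a direct summand of V: there exists a representation U of Q with V ≅ rkf(V) ⊕ U. -/
open Submodule

section Aux

/-- Propagation of compatible data along a tree. -/
lemma tree_section {Q₀ Q₁ : Type} [Fintype Q₀] [Fintype Q₁]
    (tl hd : Q₁ → Q₀)
    (hconn : ∀ x y : Q₀, Relation.ReflTransGen
      (fun u v => ∃ a : Q₁, (tl a = u ∧ hd a = v) ∨ (hd a = u ∧ tl a = v)) x y)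
    (htree : Fintype.card Q₀ = Fintype.card Q₁ + 1)
    (D : Q₀ → Type) (R : ∀ a, D (tl a) → D (hd a) → Prop)
    (hf : ∀ a d, ∃ e, R a d e) (hb : ∀ a e, ∃ d, R a d e)
    (r : Q₀) (d₀ : D r) : ∃ s : ∀ x, D x, ∀ a, R a (s (tl a)) (s (hd a)) := by
  classical
  have hne : ∀ x, Nonempty (D x) := by
    intro x
    induction hconn r x with
    | refl => exact ⟨d₀⟩
    | tail _ h ih =>
      obtain ⟨a, (⟨rfl, rfl⟩ | ⟨rfl, rfl⟩)⟩ := h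
      · obtain ⟨d⟩ := ih
        exact ⟨(hf a d).choose⟩
      · obtain ⟨d⟩ := ih
        exact ⟨(hb a d).choose⟩
  have key : ∀ k : ℕ, k ≤ Fintype.card Q₁ → ∃ (S : Finset Q₀) (T : Finset Q₁) (s : ∀ x, D x),
      r ∈ S ∧ S.card = k + 1 ∧ T.card = k ∧ (∀ a ∈ T, tl a ∈ S ∧ hd a ∈ S) ∧
      ∀ a ∈ T, R a (s (tl a)) (s (hd a)) := by
    intro k
    induction k with
    | zero =>
      intro _
      exact ⟨{r}, ∅, fun x => (hne x).some, by simp⟩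
    | succ k ih =>
      intro hk
      obtain ⟨S, T, s, hr, hS, hT, hTS, hR⟩ := ih (by omega)
      have hex : ∃ a, (tl a ∈ S ∧ hd a ∉ S) ∨ (hd a ∈ S ∧ tl a ∉ S) := by
        by_contra hcon
        push Not at hcon
        have hall : ∀ x, x ∈ S := by
          intro x
          induction hconn r x with
          | refl => exact hr
          | tail _ h ih =>
            obtain ⟨a, (⟨rfl, rfl⟩ | ⟨rfl, rfl⟩)⟩ := h
            · exact (hcon a).1 ih
            · exact (hcon a).2 ih
        have : S = Finset.univ := Finset.eq_univ_iff_forall.2 hall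
        rw [this, Finset.card_univ] at hS
        omega
      obtain ⟨a, (⟨h1, h2⟩ | ⟨h1, h2⟩)⟩ := hex
      · have haT : a ∉ T := fun h => h2 (hTS a h).2
        obtain ⟨e, he⟩ := hf a (s (tl a))
        refine ⟨insert (hd a) S, insert a T, Function.update s (hd a) e, by simp [hr],
          by rw [Finset.card_insert_of_notMem h2, hS],
          by rw [Finset.card_insert_of_notMem haT, hT], ?_, ?_⟩
        · intro b hb
          rcases Finset.mem_insert.1 hb with rfl | hb
          · simp [h1]
          · simp [hTS b hb]
        · intro b hb
          rcases Finset.mem_insert.1 hb with rfl | hb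
          · rw [Function.update_self, Function.update_of_ne (show tl b ≠ hd b from fun h => h2 (by rw [← h]; exact h1))]
            exact he
          · rw [Function.update_of_ne (show tl b ≠ hd a from fun h => h2 (by rw [← h]; exact (hTS b hb).1)),
              Function.update_of_ne (show hd b ≠ hd a from fun h => h2 (by rw [← h]; exact (hTS b hb).2))]
            exact hR b hb
      · have haT : a ∉ T := fun h => h2 (hTS a h).1
        obtain ⟨e, he⟩ := hb a (s (hd a))
        refine ⟨insert (tl a) S, insert a T, Function.update s (tl a) e, by simp [hr],
          by rw [Finset.card_insert_of_notMem h2, hS],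
          by rw [Finset.card_insert_of_notMem haT, hT], ?_, ?_⟩
        · intro b hb
          rcases Finset.mem_insert.1 hb with rfl | hb
          · simp [h1]
          · simp [hTS b hb]
        · intro b hb
          rcases Finset.mem_insert.1 hb with rfl | hb
          · rw [Function.update_self, Function.update_of_ne (show hd b ≠ tl b from fun h => h2 (by rw [← h]; exact h1))]
            exact he
          · rw [Function.update_of_ne (show tl b ≠ tl a from fun h => h2 (by rw [← h]; exact (hTS b hb).1)),
              Function.update_of_ne (show hd b ≠ tl a from fun h => h2 (by rw [← h]; exact (hTS b hb).2))]
            exact hR b hb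
  obtain ⟨S, T, s, -, -, hT, -, hR⟩ := key _ le_rfl
  have hTu : T = Finset.univ := Finset.card_eq_iff_eq_univ T |>.1 hT
  exact ⟨s, fun a => hR a (by simp [hTu])⟩

lemma exists_factor {K A B C : Type} [Field K] [AddCommGroup A] [Module K A]
    [AddCommGroup B] [Module K B] [AddCommGroup C] [Module K C]
    (F : A →ₗ[K] B) (G : A →ₗ[K] C) (h : ∀ x, F x = 0 → G x = 0) :
    ∃ q : B →ₗ[K] C, ∀ x, q (F x) = G x := by
  obtain ⟨σ, hσ⟩ := LinearMap.exists_rightInverse_of_surjective F.rangeRestrict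
    F.range_rangeRestrict
  obtain ⟨q, hq⟩ := LinearMap.exists_extend (G ∘ₗ σ)
  refine ⟨q, fun x => ?_⟩
  have h1 : q (F x) = G (σ (F.rangeRestrict x)) :=
    LinearMap.congr_fun hq (F.rangeRestrict x)
  have h2 : F.rangeRestrict (σ (F.rangeRestrict x)) = F.rangeRestrict x :=
    LinearMap.congr_fun hσ (F.rangeRestrict x)
  have h3 : F (σ (F.rangeRestrict x)) = F x := congrArg Subtype.val h2
  have h4 := h (σ (F.rangeRestrict x) - x) (by rw [map_sub, h3, sub_self])
  rw [h1, ← sub_eq_zero, ← map_sub, h4]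

variable {K : Type} [Field K]
variable {Q₀ Q₁ : Type} (tl hd : Q₁ → Q₀)
variable (Vx : Q₀ → Type) [∀ x, AddCommGroup (Vx x)] [∀ x, Module K (Vx x)]
variable (Va : ∀ a : Q₁, Vx (tl a) →ₗ[K] Vx (hd a))

lemma delta_coclosed_s13 (a : Q₁) (v : Vx (tl a)) (h : Va a v ∈ Delta tl hd Vx Va (hd a)) :
    v ∈ Delta tl hd Vx Va (tl a) := by
  rw [Delta, Submodule.mem_iInf] at h ⊢
  exact fun N => N.2.2 a (h N)

/-- The class of an element of `Γ + Δ`. -/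
abbrev rmk (x : Q₀) (v : Vx x) (h : v ∈ GD tl hd Vx Va x) : rkfSpace tl hd Vx Va x :=
  (rkfDen tl hd Vx Va x).mkQ ⟨v, h⟩

lemma rkfMap_rmk (a : Q₁) (v : Vx (tl a)) (h : v ∈ GD tl hd Vx Va (tl a)) :
    rkfMap tl hd Vx Va a (rmk tl hd Vx Va _ v h) =
      rmk tl hd Vx Va _ (Va a v) (gd_mapsTo tl hd Vx Va a v h) := rfl

lemma rmk_eq_zero (x : Q₀) (v : Vx x) (h : v ∈ GD tl hd Vx Va x)
    (hv : v ∈ Delta tl hd Vx Va x) : rmk tl hd Vx Va x v h = 0 :=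
  (Submodule.Quotient.mk_eq_zero _).2 hv

lemma of_rmk_eq_zero (x : Q₀) (v : Vx x) (h : v ∈ GD tl hd Vx Va x)
    (h0 : rmk tl hd Vx Va x v h = 0) : v ∈ Delta tl hd Vx Va x :=
  (Submodule.Quotient.mk_eq_zero (rkfDen tl hd Vx Va x)).1 h0

lemma exists_rmk (x : Q₀) (w : rkfSpace tl hd Vx Va x) :
    ∃ v, ∃ h : v ∈ Gamma tl hd Vx Va x,
      rmk tl hd Vx Va x v (Submodule.mem_sup_left h) = w := by
  obtain ⟨⟨v, hv⟩, rfl⟩ := Submodule.mkQ_surjective _ w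
  obtain ⟨g, hg, d, hd', rfl⟩ := Submodule.mem_sup.1 hv
  refine ⟨g, hg, ?_⟩
  refine ((Submodule.Quotient.eq (rkfDen tl hd Vx Va x)).2 ?_)
  show g - (g + d) ∈ Delta tl hd Vx Va x
  simpa using hd'

lemma rkfMap_bij (a : Q₁) : Function.Bijective (rkfMap tl hd Vx Va a) := by
  constructor
  · rw [injective_iff_map_eq_zero]
    intro w hw
    obtain ⟨v, h, rfl⟩ := exists_rmk tl hd Vx Va _ w
    rw [rkfMap_rmk] at hw
    exact rmk_eq_zero _ _ _ _ _ _ _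
      (delta_coclosed_s13 tl hd Vx Va a v (of_rmk_eq_zero _ _ _ _ _ _ _ hw))
  · intro w
    obtain ⟨v, h, rfl⟩ := exists_rmk tl hd Vx Va _ w
    have h' := h
    rw [← gamma_epi tl hd Vx Va a] at h'
    obtain ⟨u, hu, rfl⟩ := h'
    exact ⟨rmk tl hd Vx Va _ u (Submodule.mem_sup_left hu), rfl⟩

/-- The arrow isomorphisms of `rkf`. -/
noncomputable def rkfEquiv (a : Q₁) :
    rkfSpace tl hd Vx Va (tl a) ≃ₗ[K] rkfSpace tl hd Vx Va (hd a) :=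
  LinearEquiv.ofBijective _ (rkfMap_bij tl hd Vx Va a)

lemma rkfEquiv_apply (a : Q₁) (w) :
    rkfEquiv tl hd Vx Va a w = rkfMap tl hd Vx Va a w := rfl

/-- Local sections. -/
abbrev SecAt (x : Q₀) : Type :=
  {f : rkfSpace tl hd Vx Va x →ₗ[K] Vx x //
    ∀ w, ∃ h : f w ∈ Gamma tl hd Vx Va x,
      rmk tl hd Vx Va x (f w) (Submodule.mem_sup_left h) = w}

/-- Local retractions. -/
abbrev RetAt (x : Q₀) : Type :=
  {p : Vx x →ₗ[K] rkfSpace tl hd Vx Va x //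
    ∀ v (h : v ∈ GD tl hd Vx Va x), p v = rmk tl hd Vx Va x v h}

lemma secAt_nonempty (x : Q₀) : Nonempty (SecAt tl hd Vx Va x) := by
  let F : Gamma tl hd Vx Va x →ₗ[K] rkfSpace tl hd Vx Va x :=
    (rkfDen tl hd Vx Va x).mkQ ∘ₗ
      Submodule.inclusion (le_sup_left : Gamma tl hd Vx Va x ≤ GD tl hd Vx Va x)
  have hF : LinearMap.range F = ⊤ := by
    rw [LinearMap.range_eq_top]
    intro w
    obtain ⟨v, h, rfl⟩ := exists_rmk tl hd Vx Va _ w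
    exact ⟨⟨v, h⟩, rfl⟩
  obtain ⟨σ, hσ⟩ := LinearMap.exists_rightInverse_of_surjective F hF
  exact ⟨⟨(Gamma tl hd Vx Va x).subtype ∘ₗ σ, fun w => ⟨(σ w).2, LinearMap.congr_fun hσ w⟩⟩⟩

lemma retAt_nonempty (x : Q₀) : Nonempty (RetAt tl hd Vx Va x) := by
  obtain ⟨q, hq⟩ := LinearMap.exists_extend (rkfDen tl hd Vx Va x).mkQ
  exact ⟨⟨q, fun v h => LinearMap.congr_fun hq ⟨v, h⟩⟩⟩

lemma sec_forward (a : Q₁) (f : SecAt tl hd Vx Va (tl a)) :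
    ∃ g : SecAt tl hd Vx Va (hd a), ∀ w, Va a (f.1 w) = g.1 (rkfMap tl hd Vx Va a w) := by
  refine ⟨⟨Va a ∘ₗ f.1 ∘ₗ (rkfEquiv tl hd Vx Va a).symm.toLinearMap, fun w => ?_⟩, fun w => ?_⟩
  · obtain ⟨u, rfl⟩ := (rkfEquiv tl hd Vx Va a).surjective w
    obtain ⟨h, hu⟩ := f.2 u
    have e : (Va a ∘ₗ f.1 ∘ₗ (rkfEquiv tl hd Vx Va a).symm.toLinearMap)
        (rkfEquiv tl hd Vx Va a u) = Va a (f.1 u) := by simp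
    simp only [e]
    refine ⟨gamma_subrep tl hd Vx Va a ⟨_, h, rfl⟩, ?_⟩
    exact (rkfMap_rmk tl hd Vx Va a _ _).symm.trans (congrArg (rkfMap tl hd Vx Va a) hu)
  · rw [← rkfEquiv_apply]
    simp

lemma sec_backward (a : Q₁) (g : SecAt tl hd Vx Va (hd a)) :
    ∃ f : SecAt tl hd Vx Va (tl a), ∀ w, Va a (f.1 w) = g.1 (rkfMap tl hd Vx Va a w) := by
  let F : Gamma tl hd Vx Va (tl a) →ₗ[K] Gamma tl hd Vx Va (hd a) :=
    (Va a).restrict (fun v hv => gamma_subrep tl hd Vx Va a ⟨v, hv, rfl⟩)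
  have hF : LinearMap.range F = ⊤ := by
    rw [LinearMap.range_eq_top]
    rintro ⟨w, hw⟩
    have h' := hw
    rw [← gamma_epi tl hd Vx Va a] at h'
    obtain ⟨u, hu, rfl⟩ := h'
    exact ⟨⟨u, hu⟩, rfl⟩
  obtain ⟨σ, hσ⟩ := LinearMap.exists_rightInverse_of_surjective F hF
  let g' : rkfSpace tl hd Vx Va (hd a) →ₗ[K] Gamma tl hd Vx Va (hd a) :=
    g.1.codRestrict _ (fun w => (g.2 w).1)
  let f : rkfSpace tl hd Vx Va (tl a) →ₗ[K] Vx (tl a) :=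
    (Gamma tl hd Vx Va (tl a)).subtype ∘ₗ σ ∘ₗ g' ∘ₗ rkfMap tl hd Vx Va a
  have hf : ∀ w, Va a (f w) = g.1 (rkfMap tl hd Vx Va a w) := fun w =>
    congrArg Subtype.val (LinearMap.congr_fun hσ (g' (rkfMap tl hd Vx Va a w)))
  refine ⟨⟨f, fun w => ⟨(σ (g' (rkfMap tl hd Vx Va a w))).2, ?_⟩⟩, hf⟩
  apply (rkfMap_bij tl hd Vx Va a).1
  rw [rkfMap_rmk]
  obtain ⟨h, hw⟩ := g.2 (rkfMap tl hd Vx Va a w)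
  conv_rhs => rw [← hw]
  simp only [hf]

lemma ret_backward (a : Q₁) (q : RetAt tl hd Vx Va (hd a)) :
    ∃ p : RetAt tl hd Vx Va (tl a), ∀ v, rkfMap tl hd Vx Va a (p.1 v) = q.1 (Va a v) := by
  have key : ∀ v, rkfMap tl hd Vx Va a
      (((rkfEquiv tl hd Vx Va a).symm.toLinearMap ∘ₗ q.1 ∘ₗ Va a) v) = q.1 (Va a v) := by
    intro v
    rw [← rkfEquiv_apply]
    simp
  refine ⟨⟨(rkfEquiv tl hd Vx Va a).symm.toLinearMap ∘ₗ q.1 ∘ₗ Va a, fun v h => ?_⟩, key⟩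
  apply (rkfMap_bij tl hd Vx Va a).1
  rw [key, rkfMap_rmk]
  exact q.2 _ _

lemma ret_forward (a : Q₁) (p : RetAt tl hd Vx Va (tl a)) :
    ∃ q : RetAt tl hd Vx Va (hd a), ∀ v, rkfMap tl hd Vx Va a (p.1 v) = q.1 (Va a v) := by
  obtain ⟨q, hq⟩ := exists_factor
    (LinearMap.coprod (Va a) (GD tl hd Vx Va (hd a)).subtype)
    (LinearMap.coprod (rkfMap tl hd Vx Va a ∘ₗ p.1) (rkfDen tl hd Vx Va (hd a)).mkQ) (by
      rintro ⟨v, d, hd'⟩ h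
      simp only [LinearMap.coprod_apply, Submodule.subtype_apply] at h
      obtain ⟨g, hg, e, he, rfl⟩ := Submodule.mem_sup.1 hd'
      have hg' := hg
      rw [← gamma_epi tl hd Vx Va a] at hg'
      obtain ⟨u, hu, rfl⟩ := hg'
      have h1 : v + u ∈ Delta tl hd Vx Va (tl a) := by
        apply delta_coclosed_s13
        have : Va a (v + u) = -e := by
          rw [map_add, eq_neg_iff_add_eq_zero, ← h, add_assoc]
        rw [this]
        exact neg_mem he
      have h2 : v ∈ GD tl hd Vx Va (tl a) := by
        have : v = -u + (v + u) := by abel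
        rw [this]
        exact Submodule.add_mem_sup (neg_mem hu) h1
      simp only [LinearMap.coprod_apply, LinearMap.comp_apply]
      rw [p.2 v h2, rkfMap_rmk, ← map_add]
      exact rmk_eq_zero tl hd Vx Va _ _ (by rw [h]; exact zero_mem _)
        (by rw [h]; exact zero_mem _))
  refine ⟨⟨q, fun v h => ?_⟩, fun v => ?_⟩
  · simpa using hq (0, ⟨v, h⟩)
  · simpa using (hq (v, 0)).symm

end Aux

/-- on a tree quiver, `rkf(V)` is isomorphic to a direct sum of copies of the
identity representation `𝟙_Q`, and `rkf(V)` is isomorphic to a direct summand of `V`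
(there are morphisms of representations `ι : rkf(V) → V` and `π : V → rkf(V)` with
`π ∘ ι = id`). -/
theorem stmt_13 {K : Type} [Field K] {Q₀ Q₁ : Type} [Fintype Q₀] [Fintype Q₁]
    (tl hd : Q₁ → Q₀)
    (hconn : ∀ x y : Q₀, Relation.ReflTransGen
      (fun u v => ∃ a : Q₁, (tl a = u ∧ hd a = v) ∨ (hd a = u ∧ tl a = v)) x y)
    (htree : Fintype.card Q₀ = Fintype.card Q₁ + 1)
    (Vx : Q₀ → Type) [∀ x, AddCommGroup (Vx x)] [∀ x, Module K (Vx x)]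
    [∀ x, FiniteDimensional K (Vx x)]
    (Va : ∀ a : Q₁, Vx (tl a) →ₗ[K] Vx (hd a)) :
    (∃ n : ℕ, RepIso tl hd (rkfSpace tl hd Vx Va) (rkfMap tl hd Vx Va)
        (fun _ => Fin n → K) (fun _ => LinearMap.id)) ∧
    (∃ (ι : ∀ x : Q₀, rkfSpace tl hd Vx Va x →ₗ[K] Vx x)
        (π : ∀ x : Q₀, Vx x →ₗ[K] rkfSpace tl hd Vx Va x),
      (∀ (a : Q₁) (v : rkfSpace tl hd Vx Va (tl a)),
        Va a (ι (tl a) v) = ι (hd a) (rkfMap tl hd Vx Va a v)) ∧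
      (∀ (a : Q₁) (v : Vx (tl a)),
        rkfMap tl hd Vx Va a (π (tl a) v) = π (hd a) (Va a v)) ∧
      (∀ (x : Q₀) (v : rkfSpace tl hd Vx Va x), π x (ι x v) = v)) := by
  have hpos : 0 < Fintype.card Q₀ := by omega
  obtain ⟨r⟩ := Fintype.card_pos_iff.1 hpos
  constructor
  · let n := Module.finrank K (rkfSpace tl hd Vx Va r)
    refine ⟨n, ?_⟩
    exact tree_section tl hd hconn htree
      (fun x => rkfSpace tl hd Vx Va x ≃ₗ[K] (Fin n → K))
      (fun a d e => ∀ v, e (rkfMap tl hd Vx Va a v) = d v)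
      (fun a d => ⟨(rkfEquiv tl hd Vx Va a).symm.trans d, fun v => by
        rw [← rkfEquiv_apply]; simp⟩)
      (fun a e => ⟨(rkfEquiv tl hd Vx Va a).trans e, fun v => rfl⟩)
      r (Module.finBasis K (rkfSpace tl hd Vx Va r)).equivFun
  · obtain ⟨d₀⟩ := secAt_nonempty tl hd Vx Va r
    obtain ⟨p₀⟩ := retAt_nonempty tl hd Vx Va r
    obtain ⟨ι, hι⟩ := tree_section tl hd hconn htree (SecAt tl hd Vx Va)
      (fun a f g => ∀ w, Va a (f.1 w) = g.1 (rkfMap tl hd Vx Va a w))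
      (sec_forward tl hd Vx Va) (sec_backward tl hd Vx Va) r d₀
    obtain ⟨π, hπ⟩ := tree_section tl hd hconn htree (RetAt tl hd Vx Va)
      (fun a p q => ∀ v, rkfMap tl hd Vx Va a (p.1 v) = q.1 (Va a v))
      (ret_forward tl hd Vx Va) (ret_backward tl hd Vx Va) r p₀
    refine ⟨fun x => (ι x).1, fun x => (π x).1, hι, hπ, fun x v => ?_⟩
    obtain ⟨h, hv⟩ := (ι x).2 v
    rw [(π x).2 _ (Submodule.mem_sup_left h), hv]
end

section
/- Let Q be the two-subspace quiver with vertices 1, 2, 3 and arrows a : 1 → 2 and b : 3 → 2, and let V be a representation of Q given by linear maps A : V_1 → V_2 and B : V_3 → V_2. Then for every vertex x, dim_K (rkf V)_x = dim_K (im A ∩ im B). In particular Γ(V) = (A⁻¹(im B), im A ∩ im B, B⁻¹(im A)) and Δ(V) = (ker A, 0, ker B). -/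
open Submodule

/-- Vertices of the two-subspace quiver. -/
inductive S2V | v1 | v2 | v3

/-- Arrows of the two-subspace quiver: `a : 1 → 2`, `b : 3 → 2`. -/
inductive S2A | a | b

/-- Tails. -/
def S2t : S2A → S2V | .a => .v1 | .b => .v3

/-- Heads. -/
def S2h : S2A → S2V | .a => .v2 | .b => .v2

section S2

variable {K : Type} [Field K]
variable (V1 V2 V3 : Type) [AddCommGroup V1] [AddCommGroup V2] [AddCommGroup V3]
  [Module K V1] [Module K V2] [Module K V3]

/-- Vertex spaces. -/
def S2Vx : S2V → Type | .v1 => V1 | .v2 => V2 | .v3 => V3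

instance : ∀ x, AddCommGroup (S2Vx V1 V2 V3 x)
  | .v1 => ‹_› | .v2 => ‹_› | .v3 => ‹_›

instance : ∀ x, Module K (S2Vx V1 V2 V3 x)
  | .v1 => ‹_› | .v2 => ‹_› | .v3 => ‹_›

variable (A : V1 →ₗ[K] V2) (B : V3 →ₗ[K] V2)

/-- Arrow maps. -/
def S2Va : ∀ ar : S2A, S2Vx V1 V2 V3 (S2t ar) →ₗ[K] S2Vx V1 V2 V3 (S2h ar)
  | .a => A | .b => B

end S2

lemma aux_finrank {K V W : Type} [Field K] [AddCommGroup V] [AddCommGroup W] [Module K V]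
    [Module K W] (f : V →ₗ[K] W) (G D : Submodule K V) (R : Submodule K W)
    (hD : D = LinearMap.ker f) (hG : G.map f = R) :
    Module.finrank K (↥(G ⊔ D) ⧸ D.comap (G ⊔ D).subtype) = Module.finrank K R := by
  have hk : D.comap (G ⊔ D).subtype = LinearMap.ker (f.domRestrict (G ⊔ D)) := by
    ext v
    simp [hD]
  have hr : LinearMap.range (f.domRestrict (G ⊔ D)) = R := by
    rw [LinearMap.range_domRestrict, Submodule.map_sup, hG, hD, (LinearMap.le_ker_iff_map (f := f)).1 le_rfl,
      sup_bot_eq]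
  rw [hk, (f.domRestrict (G ⊔ D)).quotKerEquivRange.finrank_eq, hr]

/-- for the two-subspace quiver `1 → 2 ← 3` with representation
`(V₁, V₂, V₃; A, B)`: `dim (rkf V)_x = dim (im A ∩ im B)` for every vertex, with
`Γ(V) = (A⁻¹(im B), im A ∩ im B, B⁻¹(im A))` and `Δ(V) = (ker A, 0, ker B)`. -/
theorem stmt_16 {K : Type} [Field K]
    (V1 V2 V3 : Type) [AddCommGroup V1] [AddCommGroup V2] [AddCommGroup V3]
    [Module K V1] [Module K V2] [Module K V3]
    [FiniteDimensional K V1] [FiniteDimensional K V2] [FiniteDimensional K V3]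
    (A : V1 →ₗ[K] V2) (B : V3 →ₗ[K] V2) :
    (∀ x : S2V, Module.finrank K (rkfSpace S2t S2h (S2Vx V1 V2 V3) (S2Va V1 V2 V3 A B) x)
      = Module.finrank K ↥(LinearMap.range A ⊓ LinearMap.range B)) ∧
    (Gamma S2t S2h (S2Vx V1 V2 V3) (S2Va V1 V2 V3 A B) .v1
        = (LinearMap.range B).comap A ∧
      Gamma S2t S2h (S2Vx V1 V2 V3) (S2Va V1 V2 V3 A B) .v2
        = LinearMap.range A ⊓ LinearMap.range B ∧
      Gamma S2t S2h (S2Vx V1 V2 V3) (S2Va V1 V2 V3 A B) .v3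
        = (LinearMap.range A).comap B) ∧
    (Delta S2t S2h (S2Vx V1 V2 V3) (S2Va V1 V2 V3 A B) .v1 = LinearMap.ker A ∧
      Delta S2t S2h (S2Vx V1 V2 V3) (S2Va V1 V2 V3 A B) .v2 = (⊥ : Submodule K V2) ∧
      Delta S2t S2h (S2Vx V1 V2 V3) (S2Va V1 V2 V3 A B) .v3 = LinearMap.ker B) := by
  have hepi : IsEpiSub S2t S2h (S2Vx V1 V2 V3) (S2Va V1 V2 V3 A B)
      (fun | .v1 => ((LinearMap.range B).comap A : Submodule K V1)
           | .v2 => (LinearMap.range A ⊓ LinearMap.range B : Submodule K V2)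
           | .v3 => ((LinearMap.range A).comap B : Submodule K V3)) := by
    intro ar
    cases ar
    · exact Submodule.map_comap_eq A (LinearMap.range B)
    · exact (Submodule.map_comap_eq B (LinearMap.range A)).trans (inf_comm _ _)
  have hco : IsCoclosedSub S2t S2h (S2Vx V1 V2 V3) (S2Va V1 V2 V3 A B)
      (fun | .v1 => (LinearMap.ker A : Submodule K V1)
           | .v2 => (⊥ : Submodule K V2)
           | .v3 => (LinearMap.ker B : Submodule K V3)) := by
    constructor
    · intro ar
      cases ar
      · exact ((LinearMap.le_ker_iff_map (f := A)).1 le_rfl).le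
      · exact ((LinearMap.le_ker_iff_map (f := B)).1 le_rfl).le
    · intro ar
      cases ar
      · exact le_refl (LinearMap.ker A)
      · exact le_refl (LinearMap.ker B)
  have eA : Submodule.map A (Gamma S2t S2h (S2Vx V1 V2 V3) (S2Va V1 V2 V3 A B) .v1)
      = Gamma S2t S2h (S2Vx V1 V2 V3) (S2Va V1 V2 V3 A B) .v2 :=
    gamma_epi S2t S2h (S2Vx V1 V2 V3) (S2Va V1 V2 V3 A B) .a
  have eB : Submodule.map B (Gamma S2t S2h (S2Vx V1 V2 V3) (S2Va V1 V2 V3 A B) .v3)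
      = Gamma S2t S2h (S2Vx V1 V2 V3) (S2Va V1 V2 V3 A B) .v2 :=
    gamma_epi S2t S2h (S2Vx V1 V2 V3) (S2Va V1 V2 V3 A B) .b
  have lA : Gamma S2t S2h (S2Vx V1 V2 V3) (S2Va V1 V2 V3 A B) .v2 ≤ LinearMap.range A :=
    eA.ge.trans LinearMap.map_le_range
  have lB : Gamma S2t S2h (S2Vx V1 V2 V3) (S2Va V1 V2 V3 A B) .v2 ≤ LinearMap.range B :=
    eB.ge.trans LinearMap.map_le_range
  have g1 : Gamma S2t S2h (S2Vx V1 V2 V3) (S2Va V1 V2 V3 A B) .v1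
      = (LinearMap.range B).comap A :=
    le_antisymm (Submodule.map_le_iff_le_comap.1 (eA.le.trans lB))
      (le_gamma S2t S2h (S2Vx V1 V2 V3) (S2Va V1 V2 V3 A B) hepi .v1)
  have g2 : Gamma S2t S2h (S2Vx V1 V2 V3) (S2Va V1 V2 V3 A B) .v2
      = LinearMap.range A ⊓ LinearMap.range B :=
    le_antisymm (le_inf lA lB)
      (le_gamma S2t S2h (S2Vx V1 V2 V3) (S2Va V1 V2 V3 A B) hepi .v2)
  have g3 : Gamma S2t S2h (S2Vx V1 V2 V3) (S2Va V1 V2 V3 A B) .v3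
      = (LinearMap.range A).comap B :=
    le_antisymm (Submodule.map_le_iff_le_comap.1 (eB.le.trans lA))
      (le_gamma S2t S2h (S2Vx V1 V2 V3) (S2Va V1 V2 V3 A B) hepi .v3)
  have d1 : Delta S2t S2h (S2Vx V1 V2 V3) (S2Va V1 V2 V3 A B) .v1 = LinearMap.ker A :=
    le_antisymm (delta_le S2t S2h (S2Vx V1 V2 V3) (S2Va V1 V2 V3 A B) hco .v1)
      (le_iInf fun N => le_trans
        (Submodule.comap_mono (f := S2Va V1 V2 V3 A B .a) bot_le) (N.2.2 .a))
  have d2 : Delta S2t S2h (S2Vx V1 V2 V3) (S2Va V1 V2 V3 A B) .v2 = (⊥ : Submodule K V2) :=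
    le_antisymm (delta_le S2t S2h (S2Vx V1 V2 V3) (S2Va V1 V2 V3 A B) hco .v2)
      (bot_le (α := Submodule K V2))
  have d3 : Delta S2t S2h (S2Vx V1 V2 V3) (S2Va V1 V2 V3 A B) .v3 = LinearMap.ker B :=
    le_antisymm (delta_le S2t S2h (S2Vx V1 V2 V3) (S2Va V1 V2 V3 A B) hco .v3)
      (le_iInf fun N => le_trans
        (Submodule.comap_mono (f := S2Va V1 V2 V3 A B .b) bot_le) (N.2.2 .b))
  refine ⟨?_, ⟨g1, g2, g3⟩, d1, d2, d3⟩
  intro x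
  cases x
  · exact aux_finrank (V := V1) A _ _ _ d1 (eA.trans g2)
  · exact aux_finrank (V := V2) (LinearMap.id : V2 →ₗ[K] V2) _ _ _
      (d2.trans LinearMap.ker_id.symm) ((Submodule.map_id _).trans g2)
  · exact aux_finrank (V := V3) B _ _ _ d3 (eB.trans g2)
end

section
/- Let Q be the alternating A₄ quiver with vertices 1, 2, 3, 4 and arrows a : 1 → 2, b : 3 → 2, c : 3 → 4, and let V be a representation of Q given by linear maps A : V_1 → V_2, B : V_3 → V_2, C : V_3 → V_4. Then for every vertex x, dim_K (rkf V)_x = dim_K ( (im A ∩ im B) / (im A ∩ B(ker C)) ) = dim_K ( B⁻¹(im A) / (ker B + ker C) ). -/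
open Submodule

/-- Vertices of the alternating `A₄` quiver. -/
inductive A4V | v1 | v2 | v3 | v4

/-- Arrows of the alternating `A₄` quiver: `a : 1 → 2`, `b : 3 → 2`, `c : 3 → 4`. -/
inductive A4A | a | b | c

/-- Tails. -/
def A4t : A4A → A4V | .a => .v1 | .b => .v3 | .c => .v3

/-- Heads. -/
def A4h : A4A → A4V | .a => .v2 | .b => .v2 | .c => .v4

section A4

variable {K : Type} [Field K]
variable (V1 V2 V3 V4 : Type)
  [AddCommGroup V1] [AddCommGroup V2] [AddCommGroup V3] [AddCommGroup V4]
  [Module K V1] [Module K V2] [Module K V3] [Module K V4]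

/-- Vertex spaces. -/
def A4Vx : A4V → Type | .v1 => V1 | .v2 => V2 | .v3 => V3 | .v4 => V4

instance : ∀ x, AddCommGroup (A4Vx V1 V2 V3 V4 x)
  | .v1 => ‹_› | .v2 => ‹_› | .v3 => ‹_› | .v4 => ‹_›

instance : ∀ x, Module K (A4Vx V1 V2 V3 V4 x)
  | .v1 => ‹_› | .v2 => ‹_› | .v3 => ‹_› | .v4 => ‹_›

variable (A : V1 →ₗ[K] V2) (B : V3 →ₗ[K] V2) (C : V3 →ₗ[K] V4)

/-- Arrow maps. -/
def A4Va : ∀ ar : A4A, A4Vx V1 V2 V3 V4 (A4t ar) →ₗ[K] A4Vx V1 V2 V3 V4 (A4h ar)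
  | .a => A | .b => B | .c => C

end A4


lemma fr_map {K V W : Type} [Field K] [AddCommGroup V] [Module K V] [AddCommGroup W] [Module K W]
    (f : V →ₗ[K] W) (P T : Submodule K V) (R S : Submodule K W)
    (h1 : P.map f = R) (h2 : ∀ v ∈ P, (f v ∈ S ↔ v ∈ T)) :
    Module.finrank K (↥P ⧸ T.comap P.subtype) = Module.finrank K (↥R ⧸ S.comap R.subtype) := by
  have hm : ∀ v ∈ P, f v ∈ R := fun v hv => h1 ▸ Submodule.mem_map_of_mem hv
  let g : P →ₗ[K] (↥R ⧸ S.comap R.subtype) := (S.comap R.subtype).mkQ ∘ₗ f.restrict hm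
  have hg : Function.Surjective g := by
    intro y
    obtain ⟨⟨w, hw⟩, rfl⟩ := Submodule.mkQ_surjective _ y
    have hw' := hw
    rw [← h1] at hw'
    obtain ⟨v, hv, rfl⟩ := hw'
    exact ⟨⟨v, hv⟩, rfl⟩
  have hk : T.comap P.subtype = LinearMap.ker g := by
    ext ⟨v, hv⟩
    rw [LinearMap.mem_ker]
    change v ∈ T ↔ (S.comap R.subtype).mkQ (f.restrict hm ⟨v, hv⟩) = 0
    rw [Submodule.mkQ_apply, Submodule.Quotient.mk_eq_zero]
    exact (h2 v hv).symm
  rw [hk]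
  exact (g.quotKerEquivOfSurjective hg).finrank_eq

lemma fr_sup {K V : Type} [Field K] [AddCommGroup V] [Module K V] (P N : Submodule K V) :
    Module.finrank K (↥(P ⊔ N) ⧸ N.comap (P ⊔ N).subtype)
      = Module.finrank K (↥P ⧸ N.comap P.subtype) := by
  have e := (LinearMap.quotientInfEquivSupQuotient P N).finrank_eq
  rw [← e]
  have : P.comap P.subtype ⊓ N.comap P.subtype = N.comap P.subtype := by
    simp
  rw [this]

section A4H
variable {K : Type} [Field K]
variable (V1 V2 V3 V4 : Type)
  [AddCommGroup V1] [AddCommGroup V2] [AddCommGroup V3] [AddCommGroup V4]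
  [Module K V1] [Module K V2] [Module K V3] [Module K V4]
variable (A : V1 →ₗ[K] V2) (B : V3 →ₗ[K] V2) (C : V3 →ₗ[K] V4)

/-- The explicit maximal epimorphic subrepresentation. -/
def A4G : ∀ x, Submodule K (A4Vx V1 V2 V3 V4 x)
  | .v1 => (LinearMap.range B).comap A
  | .v2 => (LinearMap.range A ⊓ LinearMap.range B : Submodule K V2)
  | .v3 => (LinearMap.range A).comap B
  | .v4 => ((LinearMap.range A).comap B).map C

/-- The explicit minimal coclosed subrepresentation. -/
def A4D : ∀ x, Submodule K (A4Vx V1 V2 V3 V4 x)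
  | .v1 => ((LinearMap.ker C).map B).comap A
  | .v2 => (LinearMap.ker C).map B
  | .v3 => (LinearMap.ker B ⊔ LinearMap.ker C : Submodule K V3)
  | .v4 => (LinearMap.ker B).map C

lemma A4G_epi : IsEpiSub A4t A4h (A4Vx V1 V2 V3 V4) (A4Va V1 V2 V3 V4 A B C)
    (A4G V1 V2 V3 V4 A B C) := by
  rintro (_ | _ | _)
  · change ((LinearMap.range B).comap A).map A = LinearMap.range A ⊓ LinearMap.range B
    exact Submodule.map_comap_eq _ _
  · change ((LinearMap.range A).comap B).map B = LinearMap.range A ⊓ LinearMap.range B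
    rw [inf_comm]
    exact Submodule.map_comap_eq _ _
  · rfl

lemma A4D_coc : IsCoclosedSub A4t A4h (A4Vx V1 V2 V3 V4) (A4Va V1 V2 V3 V4 A B C)
    (A4D V1 V2 V3 V4 A B C) := by
  have hB : ((LinearMap.ker C).map B).comap B = LinearMap.ker B ⊔ LinearMap.ker C := by
    rw [Submodule.comap_map_eq, sup_comm]
  have hC : ((LinearMap.ker B).map C).comap C = LinearMap.ker B ⊔ LinearMap.ker C :=
    Submodule.comap_map_eq _ _
  constructor
  · rintro (_ | _ | _)
    · exact Submodule.map_comap_le A ((LinearMap.ker C).map B)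
    · exact Submodule.map_le_iff_le_comap.2 hB.ge
    · exact Submodule.map_le_iff_le_comap.2 hC.ge
  · rintro (_ | _ | _)
    · exact le_refl (((LinearMap.ker C).map B).comap A)
    · exact hB.le
    · exact hC.le

lemma A4_gamma (x : A4V) : Gamma A4t A4h (A4Vx V1 V2 V3 V4) (A4Va V1 V2 V3 V4 A B C) x
    = A4G V1 V2 V3 V4 A B C x := by
  refine le_antisymm (iSup_le ?_) (le_gamma _ _ _ _ (A4G_epi V1 V2 V3 V4 A B C) x)
  rintro ⟨U, hU⟩
  have ha : Submodule.map A (U .v1) = U .v2 := hU .a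
  have hb : Submodule.map B (U .v3) = U .v2 := hU .b
  have hc : Submodule.map C (U .v3) = U .v4 := hU .c
  have h2a : (U .v2 : Submodule K V2) ≤ LinearMap.range A := ha ▸ LinearMap.map_le_range
  have h2b : (U .v2 : Submodule K V2) ≤ LinearMap.range B := hb ▸ LinearMap.map_le_range
  have h3 : (U .v3 : Submodule K V3) ≤ (LinearMap.range A).comap B :=
    Submodule.map_le_iff_le_comap.1 (hb.le.trans h2a)
  rcases x with _ | _ | _ | _
  · exact Submodule.map_le_iff_le_comap.1 (ha.le.trans h2b)
  · exact le_inf h2a h2b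
  · exact h3
  · exact hc.ge.trans (Submodule.map_mono h3)

lemma A4_delta (x : A4V) : Delta A4t A4h (A4Vx V1 V2 V3 V4) (A4Va V1 V2 V3 V4 A B C) x
    = A4D V1 V2 V3 V4 A B C x := by
  refine le_antisymm (delta_le _ _ _ _ (A4D_coc V1 V2 V3 V4 A B C) x) (le_iInf ?_)
  rintro ⟨N, hN, hN'⟩
  have ha : Submodule.comap A (N .v2) ≤ N .v1 := hN' .a
  have hb : Submodule.comap B (N .v2) ≤ N .v3 := hN' .b
  have hc : Submodule.comap C (N .v4) ≤ N .v3 := hN' .c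
  have sb : Submodule.map B (N .v3) ≤ N .v2 := hN .b
  have sc : Submodule.map C (N .v3) ≤ N .v4 := hN .c
  have kb : LinearMap.ker B ≤ N .v3 := le_trans (LinearMap.ker_le_comap (f := B)) hb
  have kc : LinearMap.ker C ≤ N .v3 := le_trans (LinearMap.ker_le_comap (f := C)) hc
  have h2 : (LinearMap.ker C).map B ≤ N .v2 := (Submodule.map_mono kc).trans sb
  rcases x with _ | _ | _ | _
  · exact (Submodule.comap_mono h2).trans ha
  · exact h2
  · exact sup_le kb kc
  · exact (Submodule.map_mono kb).trans sc

lemma A4_rkf (x : A4V) :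
    Module.finrank K (rkfSpace A4t A4h (A4Vx V1 V2 V3 V4) (A4Va V1 V2 V3 V4 A B C) x)
      = Module.finrank K (↥(A4G V1 V2 V3 V4 A B C x) ⧸
          (A4D V1 V2 V3 V4 A B C x).comap (A4G V1 V2 V3 V4 A B C x).subtype) := by
  have := fr_sup (Gamma A4t A4h (A4Vx V1 V2 V3 V4) (A4Va V1 V2 V3 V4 A B C) x)
    (Delta A4t A4h (A4Vx V1 V2 V3 V4) (A4Va V1 V2 V3 V4 A B C) x)
  refine this.trans ?_
  rw [A4_gamma, A4_delta]

end A4H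

/-- for the alternating `A₄` quiver `1 → 2 ← 3 → 4` with representation
`(V₁, V₂, V₃, V₄; A, B, C)`, for every vertex `x`,
`dim (rkf V)_x = dim ((im A ∩ im B)/(im A ∩ B(ker C))) = dim (B⁻¹(im A)/(ker B + ker C))`. -/
theorem stmt_17 {K : Type} [Field K]
    (V1 V2 V3 V4 : Type)
    [AddCommGroup V1] [AddCommGroup V2] [AddCommGroup V3] [AddCommGroup V4]
    [Module K V1] [Module K V2] [Module K V3] [Module K V4]
    [FiniteDimensional K V1] [FiniteDimensional K V2] [FiniteDimensional K V3]
    [FiniteDimensional K V4]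
    (A : V1 →ₗ[K] V2) (B : V3 →ₗ[K] V2) (C : V3 →ₗ[K] V4) :
    ∀ x : A4V,
      Module.finrank K (rkfSpace A4t A4h (A4Vx V1 V2 V3 V4) (A4Va V1 V2 V3 V4 A B C) x)
        = Module.finrank K
          (↥(LinearMap.range A ⊓ LinearMap.range B) ⧸
            ((LinearMap.range A ⊓ (LinearMap.ker C).map B).comap
              (LinearMap.range A ⊓ LinearMap.range B).subtype)) ∧
      Module.finrank K (rkfSpace A4t A4h (A4Vx V1 V2 V3 V4) (A4Va V1 V2 V3 V4 A B C) x)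
        = Module.finrank K
          (↥((LinearMap.range A).comap B) ⧸
            ((LinearMap.ker B ⊔ LinearMap.ker C).comap
              ((LinearMap.range A).comap B).subtype)) := by
  have hB : ((LinearMap.ker C).map B).comap B = LinearMap.ker B ⊔ LinearMap.ker C := by
    rw [Submodule.comap_map_eq, sup_comm]
  have hC : ((LinearMap.ker B).map C).comap C = LinearMap.ker B ⊔ LinearMap.ker C :=
    Submodule.comap_map_eq _ _
  have e32 := fr_map B ((LinearMap.range A).comap B) (LinearMap.ker B ⊔ LinearMap.ker C)
    (LinearMap.range A ⊓ LinearMap.range B) (LinearMap.range A ⊓ (LinearMap.ker C).map B)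
    (by rw [inf_comm]; exact Submodule.map_comap_eq _ _)
    (by
      intro v hv
      rw [← hB]
      exact ⟨fun h => h.2, fun h => ⟨hv, h⟩⟩)
  have e34 := fr_map C ((LinearMap.range A).comap B) (LinearMap.ker B ⊔ LinearMap.ker C)
    (((LinearMap.range A).comap B).map C) ((LinearMap.ker B).map C) rfl
    (by
      intro v hv
      rw [← hC]
      exact Iff.rfl)
  have e12 := fr_map A ((LinearMap.range B).comap A) (((LinearMap.ker C).map B).comap A)
    (LinearMap.range A ⊓ LinearMap.range B) (LinearMap.range A ⊓ (LinearMap.ker C).map B)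
    (Submodule.map_comap_eq _ _)
    (by
      intro v hv
      exact ⟨fun h => h.2, fun h => ⟨⟨v, rfl⟩, h⟩⟩)
  have e22 := fr_map (LinearMap.id : V2 →ₗ[K] V2) (LinearMap.range A ⊓ LinearMap.range B)
    ((LinearMap.ker C).map B)
    (LinearMap.range A ⊓ LinearMap.range B) (LinearMap.range A ⊓ (LinearMap.ker C).map B)
    (Submodule.map_id _)
    (by
      intro v hv
      exact ⟨fun h => h.2, fun h => ⟨hv.1, h⟩⟩)
  intro x
  rw [← e32, and_self, A4_rkf]
  rcases x with _ | _ | _ | _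
  · exact e12.trans e32.symm
  · exact e22.trans e32.symm
  · rfl
  · exact e34.symm
end

section
/- Let K be a field of characteristic 0, Q a quiver, V a representation of Q over K, and k ≥ 0. Let Λᵏ V be the representation with (Λᵏ V)_x = Λᵏ(V_x) (the k-th exterior power) and (Λᵏ V)_a = Λᵏ(V_a) (the induced map on exterior powers). Then rkf(Λᵏ V) is isomorphic to Λᵏ(rkf V) as representations of Q: there is a family of linear isomorphisms ψ_x : Λᵏ((rkf V)_x) → (rkf(Λᵏ V))_x with ψ_{ha} ∘ Λᵏ((rkf V)_a) = (rkf(Λᵏ V))_a ∘ ψ_{ta} for every arrow a. -/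
open Submodule

section ExtPow

variable {K : Type} [Field K]

/-- The induced map on `k`-th exterior powers. -/
noncomputable def extPowerMap (k : ℕ) {M N : Type} [AddCommGroup M] [AddCommGroup N]
    [Module K M] [Module K N] (f : M →ₗ[K] N) : ⋀[K]^k M →ₗ[K] ⋀[K]^k N :=
  (ExteriorAlgebra.map f).toLinearMap.restrict
    (p := ⋀[K]^k M) (q := ⋀[K]^k N)
    (by
      intro x hx
      have h1 : Submodule.map (ExteriorAlgebra.map f).toLinearMap (⋀[K]^k M) ≤ ⋀[K]^k N := by
        rw [ExteriorAlgebra.exteriorPower, ExteriorAlgebra.exteriorPower, Submodule.map_pow]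
        gcongr
        rw [ExteriorAlgebra.ι_range_map_map]
        exact LinearMap.map_le_range
      exact h1 ⟨x, hx, rfl⟩)

end ExtPow


section Contraction

open TensorProduct

variable {K : Type} [Field K]
variable {V W X V₁ W₁ : Type} [AddCommGroup V] [Module K V] [AddCommGroup W] [Module K W]
  [AddCommGroup X] [Module K X] [AddCommGroup V₁] [Module K V₁] [AddCommGroup W₁] [Module K W₁]

/-- Contraction of a tensor `s ∈ V ⊗ W` against a bilinear form `B` on `X × W`. -/
noncomputable def contr (B : X →ₗ[K] W →ₗ[K] K) : V ⊗[K] W →ₗ[K] (X →ₗ[K] V) :=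
  TensorProduct.lift (LinearMap.mk₂ K (fun v w => (B.flip w).smulRight v)
    (by intros; ext; simp) (by intro c v w; ext u; exact smul_comm _ _ _)
    (by intros; ext; simp [add_smul]) (by intros; ext; simp [mul_smul]))

@[simp] lemma contr_tmul (B : X →ₗ[K] W →ₗ[K] K) (v : V) (w : W) (u : X) :
    contr B (v ⊗ₜ[K] w) u = B u w • v := by
  simp [contr]

lemma lift_curry_form (t : V ⊗[K] W →ₗ[K] K) : TensorProduct.lift (TensorProduct.curry t) = t := by
  ext; simp

lemma contr_comp (B : X →ₗ[K] W →ₗ[K] K) (m : V₁ →ₗ[K] X) (s : V ⊗[K] W) :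
    contr (B ∘ₗ m) s = contr B s ∘ₗ m := by
  induction s with
  | zero => simp
  | tmul v w => ext; simp
  | add a b ha hb => simp only [map_add, ha, hb, LinearMap.add_comp]

lemma contr_map (B : X →ₗ[K] W₁ →ₗ[K] K) (f : V →ₗ[K] V₁) (g : W →ₗ[K] W₁) (s : V ⊗[K] W) :
    contr B (TensorProduct.map f g s) = f ∘ₗ contr (B.compl₂ g) s := by
  induction s with
  | zero => simp
  | tmul v w => ext; simp
  | add a b ha hb => simp only [map_add, ha, hb, LinearMap.comp_add]

lemma contr_trace [FiniteDimensional K V] (B : V →ₗ[K] W →ₗ[K] K) (s : V ⊗[K] W) :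
    LinearMap.trace K V (contr B s) = TensorProduct.lift B s := by
  induction s with
  | zero => simp
  | tmul v w =>
    have : contr B (v ⊗ₜ[K] w) = (B.flip w).smulRight v := by ext; simp
    rw [this, LinearMap.trace_smulRight]; simp
  | add a b ha hb => simp only [map_add, ha, hb]

lemma contr_adj (B : V →ₗ[K] W →ₗ[K] K) (s : V ⊗[K] W) (u : V) (w : W) :
    B (contr B s u) w = B u (contr B.flip (TensorProduct.comm K V W s) w) := by
  induction s with
  | zero => simp
  | tmul v w => simp [mul_comm]
  | add a b ha hb => simp only [map_add, LinearMap.add_apply, ha, hb]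

lemma contr_adj_pow (B : V →ₗ[K] W →ₗ[K] K) (s : V ⊗[K] W) (n : ℕ) (u : V) (w : W) :
    B ((contr B s ^ n : Module.End K V) u) w
      = B u ((contr B.flip (TensorProduct.comm K V W s) ^ n : Module.End K W) w) := by
  induction n generalizing u with
  | zero => simp
  | succ n ih =>
    rw [pow_succ, Module.End.mul_apply, ih, contr_adj, pow_succ', Module.End.mul_apply]

lemma contr_eq_zero_of (B : X →ₗ[K] W →ₗ[K] K) (s : V ⊗[K] W) (u : X) (h : B u = 0) :
    contr B s u = 0 := by
  induction s with
  | zero => simp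
  | tmul v w => simp [h]
  | add a b ha hb => simp only [map_add, LinearMap.add_apply, ha, hb, add_zero]

lemma lift_eq_zero_of_stable [FiniteDimensional K V] [FiniteDimensional K W]
    (B : V →ₗ[K] W →ₗ[K] K) (s : V ⊗[K] W)
    (h : ∀ u ∈ ⨅ n : ℕ, LinearMap.range (contr B s ^ n : Module.End K V),
      ∀ w ∈ ⨅ n : ℕ, LinearMap.range
        (contr B.flip (TensorProduct.comm K V W s) ^ n : Module.End K W), B u w = 0) :
    TensorProduct.lift B s = 0 := by
  set φ : Module.End K V := contr B s with hφ
  set φ' : Module.End K W := contr B.flip (TensorProduct.comm K V W s) with hφ'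
  obtain ⟨N, h1, h2⟩ := (φ.eventually_iInf_range_pow_eq.and φ'.eventually_iInf_range_pow_eq).exists
  rw [h1, h2] at h
  rw [← contr_trace]
  refine (LinearMap.isNilpotent_trace_of_isNilpotent (f := φ) ⟨1 + (N + N), ?_⟩).eq_zero
  ext u
  rw [pow_add, Module.End.mul_apply, pow_one, hφ]
  apply contr_eq_zero_of
  ext w
  rw [pow_add, Module.End.mul_apply, ← hφ, contr_adj_pow]
  exact h _ ⟨u, rfl⟩ _ ⟨w, rfl⟩

lemma stable_map [FiniteDimensional K V] [FiniteDimensional K V₁]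
    (f : V →ₗ[K] V₁) (h : V₁ →ₗ[K] V) :
    (⨅ n : ℕ, LinearMap.range ((h ∘ₗ f : Module.End K V) ^ n)).map f
      = ⨅ n : ℕ, LinearMap.range ((f ∘ₗ h : Module.End K V₁) ^ n) := by
  have key : ∀ n : ℕ, ((f ∘ₗ h : Module.End K V₁) ^ n) ∘ₗ f
      = f ∘ₗ ((h ∘ₗ f : Module.End K V) ^ n) := by
    intro n
    induction n with
    | zero => rfl
    | succ n ih =>
      rw [pow_succ, pow_succ', Module.End.mul_eq_comp, Module.End.mul_eq_comp,
        LinearMap.comp_assoc, LinearMap.comp_assoc, ← LinearMap.comp_assoc, ih]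
      ext x
      have := LinearMap.congr_fun ih (h (f x))
      simp only [LinearMap.comp_apply] at this ⊢
      congr 1
      rw [← LinearMap.comp_apply h f, ← Module.End.mul_apply, ← pow_succ, pow_succ']
      rfl
  apply le_antisymm
  · refine le_iInf fun n => ?_
    refine (Submodule.map_mono (iInf_le _ n)).trans ?_
    rintro _ ⟨_, ⟨u, rfl⟩, rfl⟩
    exact ⟨f u, LinearMap.congr_fun (key n) u⟩
  · obtain ⟨N, h1⟩ := (LinearMap.eventually_iInf_range_pow_eq (h ∘ₗ f)).exists
    rw [h1]
    refine (iInf_le _ (N + 1)).trans ?_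
    rintro _ ⟨u, rfl⟩
    refine ⟨_, ⟨h u, rfl⟩, ?_⟩
    rw [pow_succ, Module.End.mul_apply, ← LinearMap.comp_apply f, ← key]
    rfl

end Contraction

section TensorRep

open TensorProduct

variable {K : Type} [Field K]
variable {Q₀ Q₁ : Type} (tl hd : Q₁ → Q₀)
variable (Vx : Q₀ → Type) [∀ x, AddCommGroup (Vx x)] [∀ x, Module K (Vx x)]
variable (Va : ∀ a : Q₁, Vx (tl a) →ₗ[K] Vx (hd a))
variable (Wx : Q₀ → Type) [∀ x, AddCommGroup (Wx x)] [∀ x, Module K (Wx x)]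
variable (Wa : ∀ a : Q₁, Wx (tl a) →ₗ[K] Wx (hd a))

/-- `Δ(V)` is itself coclosed. -/
lemma delta_comap (a : Q₁) (v : Vx (tl a)) (hv : Va a v ∈ Delta tl hd Vx Va (hd a)) :
    v ∈ Delta tl hd Vx Va (tl a) := by
  rw [Delta, Submodule.mem_iInf]
  intro N
  exact N.2.2 a (delta_le tl hd Vx Va N.2 (hd a) hv)

lemma delta_map_mem (a : Q₁) {v : Vx (tl a)} (hv : v ∈ Delta tl hd Vx Va (tl a)) :
    Va a v ∈ Delta tl hd Vx Va (hd a) :=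
  delta_subrep tl hd Vx Va a ⟨v, hv, rfl⟩

lemma gamma_map_mem (a : Q₁) {v : Vx (tl a)} (hv : v ∈ Gamma tl hd Vx Va (tl a)) :
    Va a v ∈ Gamma tl hd Vx Va (hd a) :=
  gamma_subrep tl hd Vx Va a ⟨v, hv, rfl⟩

lemma gamma_lift (a : Q₁) {v : Vx (hd a)} (hv : v ∈ Gamma tl hd Vx Va (hd a)) :
    ∃ u ∈ Gamma tl hd Vx Va (tl a), Va a u = v := by
  rw [← gamma_epi tl hd Vx Va a] at hv
  exact hv

/-- Functoriality of `Γ`. -/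
lemma gamma_functorial (F : ∀ x, Vx x →ₗ[K] Wx x)
    (hF : ∀ a v, F (hd a) (Va a v) = Wa a (F (tl a) v)) (x : Q₀) :
    (Gamma tl hd Vx Va x).map (F x) ≤ Gamma tl hd Wx Wa x := by
  refine le_gamma tl hd Wx Wa (U := fun x => (Gamma tl hd Vx Va x).map (F x)) ?_ x
  intro a
  have : Wa a ∘ₗ F (tl a) = F (hd a) ∘ₗ Va a := by ext v; simp [hF]
  simp only
  rw [← Submodule.map_comp, this, Submodule.map_comp, gamma_epi]

/-- Functoriality of `Δ`. -/
lemma delta_functorial (F : ∀ x, Vx x →ₗ[K] Wx x)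
    (hF : ∀ a v, F (hd a) (Va a v) = Wa a (F (tl a) v)) (x : Q₀) :
    Delta tl hd Vx Va x ≤ (Delta tl hd Wx Wa x).comap (F x) := by
  refine delta_le tl hd Vx Va (N := fun x => (Delta tl hd Wx Wa x).comap (F x)) ⟨?_, ?_⟩ x
  · rintro a _ ⟨v, hv, rfl⟩
    simp only [Submodule.mem_comap, hF]
    exact delta_map_mem tl hd Wx Wa a hv
  · intro a v hv
    simp only [Submodule.mem_comap, hF] at hv
    exact delta_comap tl hd Wx Wa a _ hv

/-- A functional killing `Δ` at the tail extends to one killing `Δ` at the head. -/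
lemma delta_extend (a : Q₁) (t : Vx (tl a) →ₗ[K] K)
    (ht : Delta tl hd Vx Va (tl a) ≤ LinearMap.ker t) :
    ∃ t' : Vx (hd a) →ₗ[K] K, Delta tl hd Vx Va (hd a) ≤ LinearMap.ker t' ∧ t' ∘ₗ Va a = t := by
  let F : (Vx (tl a) ⧸ Delta tl hd Vx Va (tl a)) →ₗ[K] (Vx (hd a) ⧸ Delta tl hd Vx Va (hd a)) :=
    Submodule.mapQ _ _ (Va a) (fun v hv => delta_map_mem tl hd Vx Va a hv)
  have hF : Function.Injective F := by
    rw [← LinearMap.ker_eq_bot, LinearMap.ker_eq_bot']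
    intro q hq
    obtain ⟨v, rfl⟩ := Submodule.Quotient.mk_surjective _ q
    rw [Submodule.mapQ_apply, Submodule.Quotient.mk_eq_zero] at hq
    rw [Submodule.Quotient.mk_eq_zero]
    exact delta_comap tl hd Vx Va a v hq
  obtain ⟨τ, hτ⟩ := LinearMap.dualMap_surjective_of_injective hF (Submodule.liftQ _ t ht)
  refine ⟨τ ∘ₗ Submodule.mkQ _, ?_, ?_⟩
  · intro v hv
    have : (Submodule.mkQ (Delta tl hd Vx Va (hd a))) v = 0 := by simpa using hv
    rw [LinearMap.mem_ker, LinearMap.comp_apply, this, map_zero]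
  · ext v
    have := LinearMap.congr_fun hτ (Submodule.Quotient.mk v)
    simpa [F] using this

/-- Stable images of contractions lie in `Γ`. -/
lemma stable_le_gamma [∀ x, FiniteDimensional K (Vx x)]
    (P : ∀ x, Vx x ⊗[K] Wx x → (Vx x →ₗ[K] Wx x →ₗ[K] K) → Prop)
    (h1 : ∀ a s B, P (tl a) s B → ∃ B', P (hd a) (TensorProduct.map (Va a) (Wa a) s) B' ∧
      B'.compl₁₂ (Va a) (Wa a) = B)
    (h2 : ∀ a s' B', P (hd a) s' B' → ∃ s, TensorProduct.map (Va a) (Wa a) s = s' ∧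
      P (tl a) s (B'.compl₁₂ (Va a) (Wa a)))
    (x : Q₀) (s : Vx x ⊗[K] Wx x) (B : Vx x →ₗ[K] Wx x →ₗ[K] K) (hP : P x s B) :
    (⨅ n : ℕ, LinearMap.range (contr B s ^ n : Module.End K (Vx x))) ≤ Gamma tl hd Vx Va x := by
  let G : ∀ x, Submodule K (Vx x) := fun x =>
    ⨆ p : {p : (Vx x ⊗[K] Wx x) × (Vx x →ₗ[K] Wx x →ₗ[K] K) // P x p.1 p.2},
      ⨅ n : ℕ, LinearMap.range (contr p.1.2 p.1.1 ^ n : Module.End K (Vx x))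
  have hle : ∀ x s B, P x s B →
      (⨅ n : ℕ, LinearMap.range (contr B s ^ n : Module.End K (Vx x))) ≤ G x := fun x s B h =>
    le_iSup (fun p : {p : (Vx x ⊗[K] Wx x) × (Vx x →ₗ[K] Wx x →ₗ[K] K) // P x p.1 p.2} =>
      ⨅ n : ℕ, LinearMap.range (contr p.1.2 p.1.1 ^ n : Module.End K (Vx x))) ⟨(s, B), h⟩
  have step : ∀ a s (B' : Vx (hd a) →ₗ[K] Wx (hd a) →ₗ[K] K),
      (⨅ n : ℕ, LinearMap.range
        (contr (B'.compl₁₂ (Va a) (Wa a)) s ^ n : Module.End K (Vx (tl a)))).map (Va a)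
      = ⨅ n : ℕ, LinearMap.range (contr B' (TensorProduct.map (Va a) (Wa a) s) ^ n :
          Module.End K (Vx (hd a))) := by
    intro a s B'
    have e1 : contr (B'.compl₁₂ (Va a) (Wa a)) s = contr (B'.compl₂ (Wa a)) s ∘ₗ Va a := by
      rw [← contr_comp]; rfl
    rw [e1, contr_map, stable_map]
  refine (hle x s B hP).trans (le_gamma tl hd Vx Va (U := G) ?_ x)
  intro a
  apply le_antisymm
  · rw [Submodule.map_iSup]
    refine iSup_le fun ⟨⟨s, B⟩, hp⟩ => ?_
    obtain ⟨B', hB', rfl⟩ := h1 a s B hp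
    rw [step]
    exact hle _ _ _ hB'
  · refine iSup_le fun ⟨⟨s', B'⟩, hp⟩ => ?_
    obtain ⟨s, rfl, hs⟩ := h2 a s' B' hp
    rw [← step]
    exact Submodule.map_mono (hle _ _ _ hs)

/-- The key fact about tensor products: `Γ(V ⊗ W) ⊆ Γ(V) ⊗ Γ(W) + Δ(V ⊗ W)`. -/
lemma gamma_tensor [∀ x, FiniteDimensional K (Vx x)] [∀ x, FiniteDimensional K (Wx x)] (x : Q₀) :
    Gamma tl hd (fun y => Vx y ⊗[K] Wx y) (fun a => TensorProduct.map (Va a) (Wa a)) x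
      ≤ Submodule.map₂ (TensorProduct.mk K (Vx x) (Wx x)) (Gamma tl hd Vx Va x)
          (Gamma tl hd Wx Wa x)
        ⊔ Delta tl hd (fun y => Vx y ⊗[K] Wx y) (fun a => TensorProduct.map (Va a) (Wa a)) x := by
  intro s hs
  by_contra hcon
  obtain ⟨t, hts, htk⟩ := Submodule.exists_le_ker_of_notMem hcon
  let P : ∀ x, Vx x ⊗[K] Wx x → (Vx x →ₗ[K] Wx x →ₗ[K] K) → Prop := fun x s B =>
    s ∈ Gamma tl hd (fun y => Vx y ⊗[K] Wx y) (fun a => TensorProduct.map (Va a) (Wa a)) x ∧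
    Delta tl hd (fun y => Vx y ⊗[K] Wx y) (fun a => TensorProduct.map (Va a) (Wa a)) x
      ≤ LinearMap.ker (TensorProduct.lift B)
  have hlift : ∀ a (B' : Vx (hd a) →ₗ[K] Wx (hd a) →ₗ[K] K),
      TensorProduct.lift (B'.compl₁₂ (Va a) (Wa a))
        = TensorProduct.lift B' ∘ₗ TensorProduct.map (Va a) (Wa a) := by
    intro a B'; ext; simp
  have h1 : ∀ a s B, P (tl a) s B → ∃ B', P (hd a) (TensorProduct.map (Va a) (Wa a) s) B' ∧
      B'.compl₁₂ (Va a) (Wa a) = B := by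
    rintro a s B ⟨hs, hB⟩
    obtain ⟨t', ht', h⟩ := delta_extend tl hd (fun y => Vx y ⊗[K] Wx y)
      (fun a => TensorProduct.map (Va a) (Wa a)) a _ hB
    refine ⟨TensorProduct.curry t', ⟨gamma_map_mem tl hd (fun y => Vx y ⊗[K] Wx y)
      (fun a => TensorProduct.map (Va a) (Wa a)) a hs, ?_⟩, ?_⟩
    · rwa [lift_curry_form]
    · ext v w
      have := LinearMap.congr_fun h (v ⊗ₜ w)
      simpa using this
  have h2 : ∀ a s' B', P (hd a) s' B' → ∃ s, TensorProduct.map (Va a) (Wa a) s = s' ∧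
      P (tl a) s (B'.compl₁₂ (Va a) (Wa a)) := by
    rintro a s' B' ⟨hs, hB⟩
    obtain ⟨s, hs0, rfl⟩ := gamma_lift tl hd (fun y => Vx y ⊗[K] Wx y)
      (fun a => TensorProduct.map (Va a) (Wa a)) a hs
    refine ⟨s, rfl, hs0, ?_⟩
    intro z hz
    rw [hlift, LinearMap.mem_ker, LinearMap.comp_apply]
    exact hB (delta_map_mem tl hd (fun y => Vx y ⊗[K] Wx y)
      (fun a => TensorProduct.map (Va a) (Wa a)) a hz)
  have hPx : P x s (TensorProduct.curry t) := by
    refine ⟨hs, ?_⟩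
    rw [lift_curry_form]
    exact le_sup_right.trans htk
  have e1 := stable_le_gamma tl hd Vx Va Wx Wa P h1 h2 x s _ hPx
  have e2 := stable_le_gamma tl hd Wx Wa Vx Va
    (fun x s B => P x (TensorProduct.comm K _ _ s) B.flip)
    (by
      intro a s B h
      obtain ⟨B', hB', h⟩ := h1 a _ _ h
      refine ⟨B'.flip, ?_, ?_⟩
      · rw [TensorProduct.map_comm] at hB'
        exact hB'
      · ext w v
        have := LinearMap.congr_fun₂ h v w
        simpa using this)
    (by
      intro a s' B' h
      obtain ⟨s, hs, h⟩ := h2 a _ _ h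
      refine ⟨TensorProduct.comm K _ _ s, ?_, ?_⟩
      · rw [TensorProduct.map_comm, hs]
        simp
      · have e : TensorProduct.comm K _ _ (TensorProduct.comm K _ _ s) = s := by
          simp
        rw [e]
        exact h)
    x (TensorProduct.comm K _ _ s) (TensorProduct.curry t).flip
    (by
      have e : TensorProduct.comm K _ _ (TensorProduct.comm K _ _ s) = s := by
        simp
      rw [e]
      exact hPx)
  apply hts
  have := lift_eq_zero_of_stable (TensorProduct.curry t) s (fun u hu w hw => by
    have : u ⊗ₜ[K] w ∈ LinearMap.ker t :=
      htk (le_sup_left (α := Submodule K (Vx x ⊗[K] Wx x))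
        (Submodule.apply_mem_map₂ (TensorProduct.mk K (Vx x) (Wx x)) (e1 hu) (e2 hw)))
    simpa using this)
  rwa [lift_curry_form] at this

end TensorRep

section ExtPowLemmas

open TensorProduct

variable {K : Type} [Field K]
variable {M N : Type} [AddCommGroup M] [Module K M] [AddCommGroup N] [Module K N]

@[simp] lemma extPowerMap_ιMulti (k : ℕ) (f : M →ₗ[K] N) (m : Fin k → M) :
    extPowerMap k f (exteriorPower.ιMulti K k m) = exteriorPower.ιMulti K k (f ∘ m) := by
  apply Subtype.ext
  exact ExteriorAlgebra.map_apply_ιMulti f m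

lemma extPowerMap_eq (k : ℕ) (f : M →ₗ[K] N) : extPowerMap k f = exteriorPower.map k f := by
  apply exteriorPower.linearMap_ext
  ext1 m
  simp [Function.comp_def]

/-- The wedge map `M → Λᵏ M → Λᵏ⁺¹ M`. -/
noncomputable def wedgeMap (k : ℕ) (M : Type) [AddCommGroup M] [Module K M] :
    M →ₗ[K] ⋀[K]^k M →ₗ[K] ⋀[K]^(k + 1) M :=
  (exteriorPower.alternatingMapLinearEquiv (R := K) (M := M) (n := k)
    (N := ⋀[K]^(k + 1) M)).toLinearMap ∘ₗ
    AlternatingMap.curryLeft (exteriorPower.ιMulti K (k + 1))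

lemma wedgeMap_ιMulti (k : ℕ) (u : M) (m : Fin k → M) :
    wedgeMap k M u (exteriorPower.ιMulti K k m)
      = AlternatingMap.curryLeft (exteriorPower.ιMulti K (k + 1)) u m := by
  simp [wedgeMap]

lemma wedgeMap_ιMulti' (k : ℕ) (u : M) (m : Fin k → M) :
    wedgeMap k M u (exteriorPower.ιMulti K k m)
      = exteriorPower.ιMulti K (k + 1) (Matrix.vecCons u m) := by
  rw [wedgeMap_ιMulti]; rfl

lemma wedgeMap_natural (k : ℕ) (f : M →ₗ[K] N) (u : M) (ω : ⋀[K]^k M) :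
    extPowerMap (k + 1) f (wedgeMap k M u ω) = wedgeMap k N (f u) (extPowerMap k f ω) := by
  have : extPowerMap (k + 1) f ∘ₗ wedgeMap k M u = wedgeMap k N (f u) ∘ₗ extPowerMap k f := by
    apply exteriorPower.linearMap_ext
    ext1 m
    simp only [LinearMap.compAlternatingMap_apply, LinearMap.comp_apply, wedgeMap_ιMulti',
      extPowerMap_ιMulti]
    congr 1
    ext i
    refine Fin.cases ?_ (fun j => ?_) i <;> simp
  exact LinearMap.congr_fun this ω

/-- `u ↦ (m ↦ u ⊗ (m₁ ∧ ... ∧ m_k))`. -/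
noncomputable def copAux (k : ℕ) (M : Type) [AddCommGroup M] [Module K M] :
    M →ₗ[K] M [⋀^Fin k]→ₗ[K] (M ⊗[K] ⋀[K]^k M) where
  toFun u := (TensorProduct.mk K M (⋀[K]^k M) u).compAlternatingMap (exteriorPower.ιMulti K k)
  map_add' u v := by ext m; simp
  map_smul' c u := by ext m; simp [TensorProduct.smul_tmul']

/-- The coproduct component `Λᵏ⁺¹ M → M ⊗ Λᵏ M`. -/
noncomputable def copMap (k : ℕ) (M : Type) [AddCommGroup M] [Module K M] :
    ⋀[K]^(k + 1) M →ₗ[K] M ⊗[K] ⋀[K]^k M :=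
  exteriorPower.alternatingMapLinearEquiv (AlternatingMap.alternatizeUncurryFin (copAux k M))

lemma copMap_ιMulti (k : ℕ) (m : Fin (k + 1) → M) :
    copMap k M (exteriorPower.ιMulti K (k + 1) m)
      = ∑ i : Fin (k + 1), (-1) ^ (i : ℕ) •
          (m i ⊗ₜ[K] exteriorPower.ιMulti K k (i.removeNth m)) := by
  simp [copMap, AlternatingMap.alternatizeUncurryFin_apply, copAux]

lemma copMap_natural (k : ℕ) (f : M →ₗ[K] N) (ω : ⋀[K]^(k + 1) M) :
    copMap k N (extPowerMap (k + 1) f ω)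
      = TensorProduct.map f (extPowerMap k f) (copMap k M ω) := by
  have : copMap k N ∘ₗ extPowerMap (k + 1) f
      = TensorProduct.map f (extPowerMap k f) ∘ₗ copMap k M := by
    apply exteriorPower.linearMap_ext
    ext1 m
    simp only [LinearMap.compAlternatingMap_apply, LinearMap.comp_apply, copMap_ιMulti,
      extPowerMap_ιMulti, map_sum, map_zsmul, TensorProduct.map_tmul]
    rfl
  exact LinearMap.congr_fun this ω

lemma wedge_cop (k : ℕ) (ω : ⋀[K]^(k + 1) M) :
    TensorProduct.lift (wedgeMap k M) (copMap k M ω) = (k + 1) • ω := by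
  have : TensorProduct.lift (wedgeMap k M) ∘ₗ copMap k M
      = (k + 1) • (LinearMap.id : ⋀[K]^(k + 1) M →ₗ[K] ⋀[K]^(k + 1) M) := by
    apply exteriorPower.linearMap_ext
    ext1 m
    have h := DFunLike.congr_fun (AlternatingMap.alternatizeUncurryFin_curryLeft
      (exteriorPower.ιMulti K (k + 1) (M := M))) m
    simp only [LinearMap.compAlternatingMap_apply, LinearMap.comp_apply, copMap_ιMulti,
      map_sum, map_zsmul, TensorProduct.lift.tmul, wedgeMap_ιMulti]
    rw [AlternatingMap.alternatizeUncurryFin_apply] at h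
    exact h
  exact LinearMap.congr_fun this ω

end ExtPowLemmas

section ExtRep

open TensorProduct

variable {K : Type} [Field K]
variable {Q₀ Q₁ : Type} (tl hd : Q₁ → Q₀)
variable (Vx : Q₀ → Type) [∀ x, AddCommGroup (Vx x)] [∀ x, Module K (Vx x)]
variable (Va : ∀ a : Q₁, Vx (tl a) →ₗ[K] Vx (hd a))

/-- `Γ(V) ∧ Δ(Λᵏ V) ⊆ Δ(Λᵏ⁺¹ V)`. -/
lemma gamma_wedge_delta (k : ℕ) (x : Q₀) (u : Vx x) (hu : u ∈ Gamma tl hd Vx Va x)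
    (ω : ⋀[K]^k (Vx x))
    (hω : ω ∈ Delta tl hd (fun y => ↥(⋀[K]^k (Vx y))) (fun a => extPowerMap k (Va a)) x) :
    wedgeMap k (Vx x) u ω ∈
      Delta tl hd (fun y => ↥(⋀[K]^(k + 1) (Vx y))) (fun a => extPowerMap (k + 1) (Va a)) x := by
  let N : ∀ y, Submodule K ↥(⋀[K]^k (Vx y)) := fun y =>
    ⨅ u : Gamma tl hd Vx Va y, (Delta tl hd (fun y => ↥(⋀[K]^(k + 1) (Vx y)))
      (fun a => extPowerMap (k + 1) (Va a)) y).comap (wedgeMap k (Vx y) u.1)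
  have hN : IsCoclosedSub tl hd (fun y => ↥(⋀[K]^k (Vx y))) (fun a => extPowerMap k (Va a)) N := by
    constructor
    · rintro a _ ⟨ω, hω, rfl⟩
      simp only [N, SetLike.mem_coe, Submodule.mem_iInf, Submodule.mem_comap] at hω ⊢
      rintro ⟨u', hu'⟩
      obtain ⟨u, hu, rfl⟩ := gamma_lift tl hd Vx Va a hu'
      rw [← wedgeMap_natural]
      exact delta_map_mem tl hd (fun y => ↥(⋀[K]^(k + 1) (Vx y)))
        (fun a => extPowerMap (k + 1) (Va a)) a (hω ⟨u, hu⟩)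
    · intro a ω hω
      simp only [N, Submodule.mem_iInf, Submodule.mem_comap] at hω ⊢
      rintro ⟨u, hu⟩
      apply delta_comap tl hd (fun y => ↥(⋀[K]^(k + 1) (Vx y)))
        (fun a => extPowerMap (k + 1) (Va a)) a
      rw [wedgeMap_natural]
      exact hω ⟨_, gamma_map_mem tl hd Vx Va a hu⟩
  have := delta_le tl hd (fun y => ↥(⋀[K]^k (Vx y))) (fun a => extPowerMap k (Va a)) hN x hω
  simp only [N, Submodule.mem_iInf, Submodule.mem_comap] at this
  exact this ⟨u, hu⟩

/-- The image of `Λᵏ Γ(V)` in `Λᵏ V`. -/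
def GammaPow (k : ℕ) (x : Q₀) : Submodule K ↥(⋀[K]^k (Vx x)) :=
  Submodule.span K {ω | ∃ m : Fin k → Vx x, (∀ i, m i ∈ Gamma tl hd Vx Va x) ∧
    exteriorPower.ιMulti K k m = ω}

/-- `Γ(V) ∧ Λᵏ Γ(V) ⊆ Λᵏ⁺¹ Γ(V)`. -/
lemma wedge_gammaPow (k : ℕ) (x : Q₀) (u : Vx x) (hu : u ∈ Gamma tl hd Vx Va x)
    (ω : ⋀[K]^k (Vx x)) (hω : ω ∈ GammaPow tl hd Vx Va k x) :
    wedgeMap k (Vx x) u ω ∈ GammaPow tl hd Vx Va (k + 1) x := by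
  have : GammaPow tl hd Vx Va k x
      ≤ (GammaPow tl hd Vx Va (k + 1) x).comap (wedgeMap k (Vx x) u) := by
    refine Submodule.span_le.mpr ?_
    rintro _ ⟨m, hm, rfl⟩
    refine Submodule.subset_span ⟨Matrix.vecCons u m, ?_, (wedgeMap_ιMulti' k u m).symm⟩
    intro i
    refine Fin.cases ?_ (fun j => ?_) i
    · simpa using hu
    · simpa using hm j
  exact this hω

/-- The key fact: `Γ(Λᵏ V) ⊆ Λᵏ Γ(V) + Δ(Λᵏ V)`. -/
lemma gamma_ext [CharZero K] [∀ x, FiniteDimensional K (Vx x)] (k : ℕ) (x : Q₀) :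
    Gamma tl hd (fun y => ↥(⋀[K]^k (Vx y))) (fun a => extPowerMap k (Va a)) x
      ≤ GammaPow tl hd Vx Va k x
        ⊔ Delta tl hd (fun y => ↥(⋀[K]^k (Vx y))) (fun a => extPowerMap k (Va a)) x := by
  induction k with
  | zero =>
    have : GammaPow tl hd Vx Va 0 x = ⊤ := by
      rw [eq_top_iff, ← exteriorPower.ιMulti_span]
      refine Submodule.span_mono ?_
      rintro _ ⟨m, rfl⟩
      exact ⟨m, fun i => i.elim0, rfl⟩
    rw [this, top_sup_eq]
    exact le_top
  | succ k ih =>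
    intro ω hω
    have h1 : copMap k (Vx x) ω ∈ Gamma tl hd (fun y => Vx y ⊗[K] ↥(⋀[K]^k (Vx y)))
        (fun a => TensorProduct.map (Va a) (extPowerMap k (Va a))) x :=
      gamma_functorial tl hd (fun y => ↥(⋀[K]^(k + 1) (Vx y)))
        (fun a => extPowerMap (k + 1) (Va a)) (fun y => Vx y ⊗[K] ↥(⋀[K]^k (Vx y)))
        (fun a => TensorProduct.map (Va a) (extPowerMap k (Va a)))
        (fun y => copMap k (Vx y)) (fun a v => copMap_natural k (Va a) v) x ⟨ω, hω, rfl⟩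
    have h2 := gamma_tensor tl hd Vx Va (fun y => ↥(⋀[K]^k (Vx y)))
      (fun a => extPowerMap k (Va a)) x h1
    have h3 : TensorProduct.lift (wedgeMap k (Vx x)) (copMap k (Vx x) ω) ∈
        GammaPow tl hd Vx Va (k + 1) x ⊔ Delta tl hd (fun y => ↥(⋀[K]^(k + 1) (Vx y)))
          (fun a => extPowerMap (k + 1) (Va a)) x := by
      refine Submodule.mem_comap.mp (SetLike.le_def.mp ?_ h2)
      refine sup_le ?_ ?_
      · refine Submodule.map₂_le.mpr ?_
        intro u hu η hη
        rw [Submodule.mem_comap, TensorProduct.mk_apply, TensorProduct.lift.tmul]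
        obtain ⟨α, hα, β, hβ, rfl⟩ := Submodule.mem_sup.mp (ih hη)
        rw [map_add]
        exact Submodule.add_mem_sup (wedge_gammaPow tl hd Vx Va k x u hu α hα)
          (gamma_wedge_delta tl hd Vx Va k x u hu β hβ)
      · refine (delta_functorial tl hd (fun y => Vx y ⊗[K] ↥(⋀[K]^k (Vx y)))
          (fun a => TensorProduct.map (Va a) (extPowerMap k (Va a)))
          (fun y => ↥(⋀[K]^(k + 1) (Vx y)))
          (fun a => extPowerMap (k + 1) (Va a))
          (fun y => TensorProduct.lift (wedgeMap k (Vx y))) ?_ x).trans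
          (Submodule.comap_mono le_sup_right)
        intro a s
        induction s with
        | zero => simp
        | tmul u η => simp [wedgeMap_natural]
        | add p q hp hq => simp only [map_add, hp, hq]
    rw [wedge_cop] at h3
    have h4 := Submodule.smul_mem _ ((k + 1 : K)⁻¹) h3
    have h5 : ((k + 1 : K)⁻¹) • ((k + 1) • ω) = ω := by
      rw [← Nat.cast_smul_eq_nsmul K, smul_smul]
      have : (k + 1 : K) ≠ 0 := by exact_mod_cast Nat.succ_ne_zero k
      push_cast
      rw [inv_mul_cancel₀ this, one_smul]
    rwa [h5] at h4

/-- Replacing one entry in `Γ(V)` by one in `Δ(V)` gives an element of `Δ(Λᵏ V)`. -/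
lemma update_mem_delta (k : ℕ) (x : Q₀) (m : Fin k → Vx x)
    (hm : ∀ i, m i ∈ Gamma tl hd Vx Va x) (i : Fin k) (u : Vx x) (hu : u ∈ Delta tl hd Vx Va x) :
    exteriorPower.ιMulti K k (Function.update m i u) ∈
      Delta tl hd (fun y => ↥(⋀[K]^k (Vx y))) (fun a => extPowerMap k (Va a)) x := by
  let N : ∀ y, Submodule K (Vx y) := fun y =>
    ⨅ m : {m : Fin k → Vx y // ∀ i, m i ∈ Gamma tl hd Vx Va y},
      (Delta tl hd (fun y => ↥(⋀[K]^k (Vx y))) (fun a => extPowerMap k (Va a)) y).comap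
        ((exteriorPower.ιMulti K k (M := Vx y)).toMultilinearMap.toLinearMap m.1 i)
  have hN : IsCoclosedSub tl hd Vx Va N := by
    constructor
    · rintro a _ ⟨u, hu, rfl⟩
      simp only [N, SetLike.mem_coe, Submodule.mem_iInf, Submodule.mem_comap,
        MultilinearMap.toLinearMap_apply, AlternatingMap.coe_multilinearMap] at hu ⊢
      rintro ⟨m', hm'⟩
      choose m hm hmm using fun j => gamma_lift tl hd Vx Va a (hm' j)
      have := delta_map_mem tl hd (fun y => ↥(⋀[K]^k (Vx y)))
        (fun a => extPowerMap k (Va a)) a (hu ⟨m, hm⟩)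
      rw [extPowerMap_ιMulti, Function.comp_update] at this
      have e : (Va a) ∘ m = m' := funext hmm
      rwa [e] at this
    · intro a u hu
      simp only [N, Submodule.mem_iInf, Submodule.mem_comap,
        MultilinearMap.toLinearMap_apply, AlternatingMap.coe_multilinearMap] at hu ⊢
      rintro ⟨m, hm⟩
      apply delta_comap tl hd (fun y => ↥(⋀[K]^k (Vx y))) (fun a => extPowerMap k (Va a)) a
      rw [extPowerMap_ιMulti, Function.comp_update]
      exact hu ⟨(Va a) ∘ m, fun j => gamma_map_mem tl hd Vx Va a (hm j)⟩
  have := delta_le tl hd Vx Va hN x hu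
  simp only [N, Submodule.mem_iInf, Submodule.mem_comap,
    MultilinearMap.toLinearMap_apply, AlternatingMap.coe_multilinearMap] at this
  exact this ⟨m, hm⟩

/-- Modulo `Δ(Λᵏ V)`, a product of elements of `Γ(V)` depends only on the classes mod `Δ(V)`. -/
lemma sub_mem_delta (k : ℕ) (x : Q₀) (m m' : Fin k → Vx x)
    (hm : ∀ i, m i ∈ Gamma tl hd Vx Va x) (hm' : ∀ i, m' i ∈ Gamma tl hd Vx Va x)
    (h : ∀ i, m i - m' i ∈ Delta tl hd Vx Va x) :
    exteriorPower.ιMulti K k m - exteriorPower.ιMulti K k m' ∈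
      Delta tl hd (fun y => ↥(⋀[K]^k (Vx y))) (fun a => extPowerMap k (Va a)) x := by
  classical
  have key : ∀ s : Finset (Fin k),
      exteriorPower.ιMulti K k (s.piecewise m m') - exteriorPower.ιMulti K k m' ∈
      Delta tl hd (fun y => ↥(⋀[K]^k (Vx y))) (fun a => extPowerMap k (Va a)) x := by
    intro s
    induction s using Finset.induction_on with
    | empty => simp
    | insert i s hi ih =>
      have e1 : exteriorPower.ιMulti K k ((insert i s).piecewise m m')
          = exteriorPower.ιMulti K k (Function.update (s.piecewise m m') i (m i - m' i))
            + exteriorPower.ιMulti K k (s.piecewise m m') := by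
        rw [Finset.piecewise_insert]
        have e2 : exteriorPower.ιMulti K k (s.piecewise m m')
            = exteriorPower.ιMulti K k (Function.update (s.piecewise m m') i (m' i)) := by
          congr 1
          rw [eq_comm, Function.update_eq_self_iff]
          simp [hi]
        conv_rhs => rw [e2]
        rw [← AlternatingMap.map_update_add, sub_add_cancel]
      rw [e1, add_sub_assoc]
      refine Submodule.add_mem _ ?_ ih
      refine update_mem_delta tl hd Vx Va k x _ (fun j => ?_) i _ (h i)
      by_cases hj : j ∈ s
      · simpa [hj] using hm j
      · simpa [hj] using hm' j
  simpa using key Finset.univ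

end ExtRep

section Final

variable {K : Type} [Field K]
variable {Q₀ Q₁ : Type} (tl hd : Q₁ → Q₀)
variable (Vx : Q₀ → Type) [∀ x, AddCommGroup (Vx x)] [∀ x, Module K (Vx x)]
variable (Va : ∀ a : Q₁, Vx (tl a) →ₗ[K] Vx (hd a))

lemma gammaPow_le_gamma (k : ℕ) (x : Q₀) :
    GammaPow tl hd Vx Va k x
      ≤ Gamma tl hd (fun y => ↥(⋀[K]^k (Vx y))) (fun a => extPowerMap k (Va a)) x := by
  refine le_gamma tl hd (fun y => ↥(⋀[K]^k (Vx y))) (fun a => extPowerMap k (Va a))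
    (U := GammaPow tl hd Vx Va k) ?_ x
  intro a
  apply le_antisymm
  · rw [Submodule.map_le_iff_le_comap]
    refine Submodule.span_le.mpr ?_
    rintro _ ⟨m, hm, rfl⟩
    exact Submodule.subset_span ⟨Va a ∘ m, fun i => gamma_map_mem tl hd Vx Va a (hm i),
      (extPowerMap_ιMulti k (Va a) m).symm⟩
  · refine Submodule.span_le.mpr ?_
    rintro _ ⟨m', hm', rfl⟩
    choose m hm hmm using fun j => gamma_lift tl hd Vx Va a (hm' j)
    refine ⟨exteriorPower.ιMulti K k m, Submodule.subset_span ⟨m, hm, rfl⟩, ?_⟩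
    rw [extPowerMap_ιMulti]
    congr 1
    exact funext hmm

lemma extPowerMap_comp_apply (k : ℕ) {L M N : Type} [AddCommGroup L] [Module K L]
    [AddCommGroup M] [Module K M] [AddCommGroup N] [Module K N]
    (g : M →ₗ[K] N) (f : L →ₗ[K] M) (ω : ⋀[K]^k L) :
    extPowerMap k g (extPowerMap k f ω) = extPowerMap k (g ∘ₗ f) ω := by
  rw [extPowerMap_eq, extPowerMap_eq, extPowerMap_eq, exteriorPower.map_comp,
    LinearMap.comp_apply]

lemma extPowerMap_injective (k : ℕ) {M N : Type}
    [AddCommGroup M] [Module K M] [AddCommGroup N] [Module K N]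
    (f : M →ₗ[K] N) (hf : Function.Injective f) : Function.Injective (extPowerMap k f) := by
  rw [extPowerMap_eq]
  exact exteriorPower.map_injective_field hf

/-- `Δ(Λᵏ V)` dies in `Λᵏ(V/Δ)`. -/
lemma delta_ext_le (k : ℕ) (x : Q₀) :
    Delta tl hd (fun y => ↥(⋀[K]^k (Vx y))) (fun a => extPowerMap k (Va a)) x
      ≤ LinearMap.ker (extPowerMap k (Delta tl hd Vx Va x).mkQ) := by
  refine delta_le tl hd (fun y => ↥(⋀[K]^k (Vx y))) (fun a => extPowerMap k (Va a))
    (N := fun x => LinearMap.ker (extPowerMap k (Delta tl hd Vx Va x).mkQ)) ?_ x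
  have main : ∀ (a : Q₁) (ω : ⋀[K]^k (Vx (tl a))),
      extPowerMap k (Delta tl hd Vx Va (hd a)).mkQ (extPowerMap k (Va a) ω) = 0 ↔
      extPowerMap k (Delta tl hd Vx Va (tl a)).mkQ ω = 0 := by
    intro a ω
    let F : (Vx (tl a) ⧸ Delta tl hd Vx Va (tl a)) →ₗ[K] (Vx (hd a) ⧸ Delta tl hd Vx Va (hd a)) :=
      Submodule.mapQ _ _ (Va a) (fun v hv => delta_map_mem tl hd Vx Va a hv)
    have hF : Function.Injective F := by
      rw [← LinearMap.ker_eq_bot, LinearMap.ker_eq_bot']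
      intro q hq
      obtain ⟨v, rfl⟩ := Submodule.Quotient.mk_surjective _ q
      rw [Submodule.mapQ_apply, Submodule.Quotient.mk_eq_zero] at hq
      rw [Submodule.Quotient.mk_eq_zero]
      exact delta_comap tl hd Vx Va a v hq
    have e : (Delta tl hd Vx Va (hd a)).mkQ ∘ₗ Va a = F ∘ₗ (Delta tl hd Vx Va (tl a)).mkQ := by
      ext v; simp [F]
    rw [extPowerMap_comp_apply, e, ← extPowerMap_comp_apply]
    exact map_eq_zero_iff _ (extPowerMap_injective k F hF)
  constructor
  · rintro a _ ⟨ω, hω, rfl⟩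
    exact (main a ω).mpr hω
  · intro a ω hω
    exact (main a ω).mp hω

/-- A linear section of `Γ → rkf`. -/
lemma exists_section (x : Q₀) :
    ∃ ρ : rkfSpace tl hd Vx Va x →ₗ[K] Vx x, (∀ ξ, ρ ξ ∈ Gamma tl hd Vx Va x) ∧
      ∀ v : GD tl hd Vx Va x,
        (v : Vx x) - ρ (Submodule.Quotient.mk v) ∈ Delta tl hd Vx Va x := by
  let q : Gamma tl hd Vx Va x →ₗ[K] rkfSpace tl hd Vx Va x :=
    (rkfDen tl hd Vx Va x).mkQ ∘ₗ Submodule.inclusion le_sup_left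
  have hq : LinearMap.range q = ⊤ := by
    rw [LinearMap.range_eq_top]
    intro ξ
    obtain ⟨⟨v, hv⟩, rfl⟩ := Submodule.Quotient.mk_surjective _ ξ
    obtain ⟨g, hg, d, hd', rfl⟩ := Submodule.mem_sup.mp hv
    refine ⟨⟨g, hg⟩, ?_⟩
    refine (Submodule.Quotient.eq _).mpr ?_
    rw [Submodule.mem_comap]
    simpa using hd'
  obtain ⟨r, hr⟩ := LinearMap.exists_rightInverse_of_surjective q hq
  refine ⟨(Gamma tl hd Vx Va x).subtype ∘ₗ r, fun ξ => (r ξ).2, fun v => ?_⟩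
  have h := LinearMap.congr_fun hr (Submodule.Quotient.mk v)
  have hsub := (Submodule.Quotient.eq _).mp h.symm
  exact hsub

/-- A linear map into `Γ(V)_x` induces a linear map into `rkf(V)_x`. -/
def toRkf (x : Q₀) {X : Type} [AddCommGroup X] [Module K X] (f : X →ₗ[K] Vx x)
    (hf : ∀ u, f u ∈ Gamma tl hd Vx Va x) : X →ₗ[K] rkfSpace tl hd Vx Va x :=
  (rkfDen tl hd Vx Va x).mkQ ∘ₗ LinearMap.codRestrict (GD tl hd Vx Va x) f
    (fun u => (le_sup_left : _ ≤ GD tl hd Vx Va x) (hf u))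

lemma toRkf_eq_zero (x : Q₀) {X : Type} [AddCommGroup X] [Module K X] (f : X →ₗ[K] Vx x)
    (hf : ∀ u, f u ∈ Gamma tl hd Vx Va x) (u : X) (h : toRkf tl hd Vx Va x f hf u = 0) :
    f u ∈ Delta tl hd Vx Va x :=
  (Submodule.Quotient.mk_eq_zero (rkfDen tl hd Vx Va x)).mp h

lemma toRkf_surjective (x : Q₀) {X : Type} [AddCommGroup X] [Module K X] (f : X →ₗ[K] Vx x)
    (hf : ∀ u, f u ∈ Gamma tl hd Vx Va x)
    (h : Gamma tl hd Vx Va x ≤ LinearMap.range f ⊔ Delta tl hd Vx Va x) :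
    Function.Surjective (toRkf tl hd Vx Va x f hf) := by
  intro η
  obtain ⟨⟨v, hv⟩, rfl⟩ := Submodule.Quotient.mk_surjective _ η
  obtain ⟨_, ⟨ω, rfl⟩, δ, hδ, rfl⟩ := Submodule.mem_sup.mp (sup_le h le_sup_right hv)
  refine ⟨ω, (Submodule.Quotient.eq _).mpr ?_⟩
  show f ω - (f ω + δ) ∈ Delta tl hd Vx Va x
  simpa using hδ

lemma toRkf_natural (a : Q₁) {X Y : Type} [AddCommGroup X] [Module K X] [AddCommGroup Y]
    [Module K Y] (f : X →ₗ[K] Vx (tl a)) (hf : ∀ u, f u ∈ Gamma tl hd Vx Va (tl a))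
    (g : Y →ₗ[K] Vx (hd a)) (hg : ∀ u, g u ∈ Gamma tl hd Vx Va (hd a)) (u : X) (w : Y)
    (h : g w - Va a (f u) ∈ Delta tl hd Vx Va (hd a)) :
    toRkf tl hd Vx Va (hd a) g hg w
      = rkfMap tl hd Vx Va a (toRkf tl hd Vx Va (tl a) f hf u) :=
  (Submodule.Quotient.eq _).mpr h

lemma extPowerMap_section_mem (k : ℕ) (x : Q₀) (ρ : rkfSpace tl hd Vx Va x →ₗ[K] Vx x)
    (h1 : ∀ ξ, ρ ξ ∈ Gamma tl hd Vx Va x) (ω : ⋀[K]^k (rkfSpace tl hd Vx Va x)) :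
    extPowerMap k ρ ω ∈
      Gamma tl hd (fun y => ↥(⋀[K]^k (Vx y))) (fun a => extPowerMap k (Va a)) x := by
  refine gammaPow_le_gamma tl hd Vx Va k x ?_
  have : (⊤ : Submodule K ↥(⋀[K]^k (rkfSpace tl hd Vx Va x)))
      ≤ (GammaPow tl hd Vx Va k x).comap (extPowerMap k ρ) := by
    rw [← exteriorPower.ιMulti_span]
    refine Submodule.span_le.mpr ?_
    rintro _ ⟨m, rfl⟩
    exact Submodule.subset_span ⟨ρ ∘ m, fun i => h1 _, (extPowerMap_ιMulti k ρ m).symm⟩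
  exact this trivial

/-- The comparison map `Λᵏ(rkf V) → rkf(Λᵏ V)`. -/
noncomputable def psiMap (k : ℕ) (x : Q₀) (ρ : rkfSpace tl hd Vx Va x →ₗ[K] Vx x)
    (h1 : ∀ ξ, ρ ξ ∈ Gamma tl hd Vx Va x) :
    ↥(⋀[K]^k (rkfSpace tl hd Vx Va x)) →ₗ[K]
      rkfSpace tl hd (fun y => ↥(⋀[K]^k (Vx y))) (fun a => extPowerMap k (Va a)) x :=
  toRkf tl hd (fun y => ↥(⋀[K]^k (Vx y))) (fun a => extPowerMap k (Va a)) x (extPowerMap k ρ)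
    (extPowerMap_section_mem tl hd Vx Va k x ρ h1)

lemma psiMap_injective (k : ℕ) (x : Q₀) (ρ : rkfSpace tl hd Vx Va x →ₗ[K] Vx x)
    (h1 : ∀ ξ, ρ ξ ∈ Gamma tl hd Vx Va x)
    (h2 : ∀ v : GD tl hd Vx Va x,
        (v : Vx x) - ρ (Submodule.Quotient.mk v) ∈ Delta tl hd Vx Va x) :
    Function.Injective (psiMap tl hd Vx Va k x ρ h1) := by
  rw [← LinearMap.ker_eq_bot, LinearMap.ker_eq_bot']
  intro ω hω
  have h3 : extPowerMap k ρ ω ∈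
      Delta tl hd (fun y => ↥(⋀[K]^k (Vx y))) (fun a => extPowerMap k (Va a)) x :=
    toRkf_eq_zero tl hd (fun y => ↥(⋀[K]^k (Vx y))) (fun a => extPowerMap k (Va a)) x _ _ ω hω
  have h4 := delta_ext_le tl hd Vx Va k x h3
  rw [LinearMap.mem_ker, extPowerMap_comp_apply] at h4
  refine (map_eq_zero_iff _ (extPowerMap_injective k _ ?_)).mp h4
  rw [← LinearMap.ker_eq_bot, LinearMap.ker_eq_bot']
  intro ξ hξ
  obtain ⟨v, rfl⟩ := Submodule.Quotient.mk_surjective _ ξ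
  rw [LinearMap.comp_apply, Submodule.mkQ_apply, Submodule.Quotient.mk_eq_zero] at hξ
  rw [Submodule.Quotient.mk_eq_zero]
  have := Submodule.add_mem _ (h2 v) hξ
  rw [sub_add_cancel] at this
  exact this

lemma psiMap_surjective [CharZero K] [∀ x, FiniteDimensional K (Vx x)]
    (k : ℕ) (x : Q₀) (ρ : rkfSpace tl hd Vx Va x →ₗ[K] Vx x)
    (h1 : ∀ ξ, ρ ξ ∈ Gamma tl hd Vx Va x)
    (h2 : ∀ v : GD tl hd Vx Va x,
        (v : Vx x) - ρ (Submodule.Quotient.mk v) ∈ Delta tl hd Vx Va x) :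
    Function.Surjective (psiMap tl hd Vx Va k x ρ h1) := by
  have h3 : GammaPow tl hd Vx Va k x ≤ LinearMap.range (extPowerMap k ρ) ⊔
      Delta tl hd (fun y => ↥(⋀[K]^k (Vx y))) (fun a => extPowerMap k (Va a)) x := by
    refine Submodule.span_le.mpr ?_
    rintro _ ⟨m, hm, rfl⟩
    let ξ : Fin k → rkfSpace tl hd Vx Va x := fun i =>
      Submodule.Quotient.mk ⟨m i, (le_sup_left : _ ≤ GD tl hd Vx Va x) (hm i)⟩
    have h4 := sub_mem_delta tl hd Vx Va k x m (ρ ∘ ξ) hm (fun i => h1 _)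
      (fun i => h2 ⟨m i, (le_sup_left : _ ≤ GD tl hd Vx Va x) (hm i)⟩)
    refine Submodule.mem_sup.mpr ⟨_, ⟨exteriorPower.ιMulti K k ξ, rfl⟩, _, h4, ?_⟩
    rw [extPowerMap_ιMulti, add_sub_cancel]
  exact toRkf_surjective tl hd (fun y => ↥(⋀[K]^k (Vx y))) (fun a => extPowerMap k (Va a)) x _ _
    ((gamma_ext tl hd Vx Va k x).trans (sup_le h3 le_sup_right))

lemma psiMap_natural (k : ℕ) (ρ : ∀ x, rkfSpace tl hd Vx Va x →ₗ[K] Vx x)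
    (h1 : ∀ x ξ, ρ x ξ ∈ Gamma tl hd Vx Va x)
    (h2 : ∀ x, ∀ v : GD tl hd Vx Va x,
        (v : Vx x) - ρ x (Submodule.Quotient.mk v) ∈ Delta tl hd Vx Va x)
    (a : Q₁) (v : ↥(⋀[K]^k (rkfSpace tl hd Vx Va (tl a)))) :
    psiMap tl hd Vx Va k (hd a) (ρ (hd a)) (h1 (hd a)) (extPowerMap k (rkfMap tl hd Vx Va a) v)
      = rkfMap tl hd (fun y => ↥(⋀[K]^k (Vx y))) (fun a => extPowerMap k (Va a)) a
          (psiMap tl hd Vx Va k (tl a) (ρ (tl a)) (h1 (tl a)) v) := by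
  have : psiMap tl hd Vx Va k (hd a) (ρ (hd a)) (h1 (hd a)) ∘ₗ
        extPowerMap k (rkfMap tl hd Vx Va a)
      = rkfMap tl hd (fun y => ↥(⋀[K]^k (Vx y))) (fun a => extPowerMap k (Va a)) a ∘ₗ
          psiMap tl hd Vx Va k (tl a) (ρ (tl a)) (h1 (tl a)) := by
    apply exteriorPower.linearMap_ext
    ext1 ξ
    refine toRkf_natural tl hd (fun y => ↥(⋀[K]^k (Vx y))) (fun a => extPowerMap k (Va a)) a
      _ (extPowerMap_section_mem tl hd Vx Va k (tl a) (ρ (tl a)) (h1 (tl a)))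
      _ (extPowerMap_section_mem tl hd Vx Va k (hd a) (ρ (hd a)) (h1 (hd a)))
      (exteriorPower.ιMulti K k ξ)
      (extPowerMap k (rkfMap tl hd Vx Va a) (exteriorPower.ιMulti K k ξ)) ?_
    rw [extPowerMap_ιMulti, extPowerMap_ιMulti, extPowerMap_ιMulti, extPowerMap_ιMulti]
    refine sub_mem_delta tl hd Vx Va k (hd a) _ _ (fun i => h1 _ _)
      (fun i => gamma_map_mem tl hd Vx Va a (h1 _ _)) (fun i => ?_)
    simp only [Function.comp_apply]
    obtain ⟨w, hw⟩ := Submodule.Quotient.mk_surjective _ (ξ i)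
    rw [← hw]
    have e1 := h2 (hd a) ⟨Va a w, gd_mapsTo tl hd Vx Va a w w.2⟩
    have e2 := delta_map_mem tl hd Vx Va a (h2 (tl a) w)
    rw [map_sub] at e2
    have e3 := Submodule.sub_mem _ e2 e1
    rw [sub_sub_sub_cancel_left] at e3
    exact e3
  exact LinearMap.congr_fun this v

end Final

set_option maxHeartbeats 2000000 in
set_option synthInstance.maxHeartbeats 1000000 in
/-- in characteristic `0`, the global tensor functor commutes with exterior
powers: `rkf(Λᵏ V) ≅ Λᵏ(rkf V)` as representations of `Q`. -/
theorem stmt_18 {K : Type} [Field K] [CharZero K] {Q₀ Q₁ : Type} [Fintype Q₀] [Fintype Q₁]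
    (tl hd : Q₁ → Q₀)
    (Vx : Q₀ → Type) [∀ x, AddCommGroup (Vx x)] [∀ x, Module K (Vx x)]
    [∀ x, FiniteDimensional K (Vx x)]
    (Va : ∀ a : Q₁, Vx (tl a) →ₗ[K] Vx (hd a)) (k : ℕ) :
    ∃ ψ : ∀ x : Q₀,
        ↥(⋀[K]^k (rkfSpace tl hd Vx Va x)) ≃ₗ[K]
          rkfSpace tl hd (fun y => ↥(⋀[K]^k (Vx y))) (fun a => extPowerMap k (Va a)) x,
      ∀ (a : Q₁) (v : ↥(⋀[K]^k (rkfSpace tl hd Vx Va (tl a)))),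
        ψ (hd a) (extPowerMap k (rkfMap tl hd Vx Va a) v)
          = rkfMap tl hd (fun y => ↥(⋀[K]^k (Vx y))) (fun a => extPowerMap k (Va a)) a
              (ψ (tl a) v) := by
  classical
  choose ρ h1 h2 using exists_section tl hd Vx Va
  refine ⟨fun x => LinearEquiv.ofBijective (psiMap tl hd Vx Va k x (ρ x) (h1 x))
    ⟨psiMap_injective tl hd Vx Va k x (ρ x) (h1 x) (h2 x),
      psiMap_surjective tl hd Vx Va k x (ρ x) (h1 x) (h2 x)⟩, fun a v => ?_⟩
  exact psiMap_natural tl hd Vx Va k ρ h1 h2 a v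
end

section
/- Let Q be the quiver with vertices 1, 2, 3, 4 and arrows a : 1 → 3, b : 2 → 3, c : 3 → 4. Let W be the representation with W_1 = W_2 = W_4 = K, W_3 = K², W_a = e₁ (inclusion as first coordinate), W_b = e₂ (inclusion as second coordinate), and W_c = (1 1) (the map (x,y) ↦ x+y). Let S₃ be the simple representation with (S₃)_3 = K and all other vertex spaces 0. Then W ⊗ W is isomorphic, as a representation of Q, to W ⊕ S₃ ⊕ S₃. -/
open Submodule

/-- Vertices `1, 2, 3, 4`. -/
inductive TQV | w1 | w2 | w3 | w4

/-- Arrows `a : 1 → 3`, `b : 2 → 3`, `c : 3 → 4`. -/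
inductive TQA | a | b | c

/-- Tails. -/
def TQt : TQA → TQV | .a => .w1 | .b => .w2 | .c => .w3

/-- Heads. -/
def TQh : TQA → TQV | .a => .w3 | .b => .w3 | .c => .w4

section TQ

variable (K : Type) [Field K]

/-- Vertex spaces of `W`: `K` at `1, 2, 4` and `K²` at `3`. -/
def TQWx : TQV → Type | .w3 => Fin 2 → K | _ => K

instance : ∀ x, AddCommGroup (TQWx K x)
  | .w1 => inferInstanceAs (AddCommGroup K)
  | .w2 => inferInstanceAs (AddCommGroup K)
  | .w3 => inferInstanceAs (AddCommGroup (Fin 2 → K))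
  | .w4 => inferInstanceAs (AddCommGroup K)

instance : ∀ x, Module K (TQWx K x)
  | .w1 => inferInstanceAs (Module K K)
  | .w2 => inferInstanceAs (Module K K)
  | .w3 => inferInstanceAs (Module K (Fin 2 → K))
  | .w4 => inferInstanceAs (Module K K)

/-- Arrow maps of `W`: `a ↦ e₁`, `b ↦ e₂`, `c ↦ (1 1)`. -/
noncomputable def TQWa : ∀ ar : TQA, TQWx K (TQt ar) →ₗ[K] TQWx K (TQh ar)
  | .a => LinearMap.toSpanSingleton K (Fin 2 → K) (Pi.single 0 1)
  | .b => LinearMap.toSpanSingleton K (Fin 2 → K) (Pi.single 1 1)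
  | .c => (LinearMap.proj 0 : (Fin 2 → K) →ₗ[K] K) + (LinearMap.proj 1 : (Fin 2 → K) →ₗ[K] K)

/-- Vertex spaces of the simple representation `S₃`: `K` at vertex `3`, `0` elsewhere. -/
def TQSx : TQV → Type | .w3 => K | _ => PUnit

instance : ∀ x, AddCommGroup (TQSx K x)
  | .w1 => inferInstanceAs (AddCommGroup PUnit)
  | .w2 => inferInstanceAs (AddCommGroup PUnit)
  | .w3 => inferInstanceAs (AddCommGroup K)
  | .w4 => inferInstanceAs (AddCommGroup PUnit)

instance : ∀ x, Module K (TQSx K x)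
  | .w1 => inferInstanceAs (Module K PUnit)
  | .w2 => inferInstanceAs (Module K PUnit)
  | .w3 => inferInstanceAs (Module K K)
  | .w4 => inferInstanceAs (Module K PUnit)

/-- Arrow maps of `S₃` (all zero). -/
def TQSa : ∀ ar : TQA, TQSx K (TQt ar) →ₗ[K] TQSx K (TQh ar) := fun _ => 0

end TQ

/-- Explicit coordinate change on `K^(2×2)`. -/
def tqCoord (K : Type) [Field K] : (Fin 2 → Fin 2 → K) ≃ₗ[K] (Fin 2 → K) × K × K where
  toFun m := (![m 0 0 + m 0 1, m 1 1 + m 1 0], m 0 1, m 1 0)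
  invFun p := ![![p.1 0 - p.2.1, p.2.1], ![p.2.2, p.1 1 - p.2.2]]
  map_add' m n := by
    ext i
    · fin_cases i <;> simp <;> ring
    · simp
    · simp
  map_smul' r m := by
    ext i
    · fin_cases i <;> simp <;> ring
    · simp
    · simp
  left_inv m := by
    ext i j
    fin_cases i <;> fin_cases j <;> simp
  right_inv p := by
    ext i
    · fin_cases i <;> simp
    · simp
    · simp

/-- The isomorphism at vertex `3`. -/
noncomputable def tqThree (K : Type) [Field K] :
    TensorProduct K (Fin 2 → K) (Fin 2 → K) ≃ₗ[K] (Fin 2 → K) × K × K :=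
  (TensorProduct.piScalarRight K K (Fin 2 → K) (Fin 2)).trans (tqCoord K)

lemma tqThree_tmul (K : Type) [Field K] (u v : Fin 2 → K) :
    tqThree K (TensorProduct.tmul K u v) =
      (![v 0 * u 0 + v 0 * u 1, v 1 * u 1 + v 1 * u 0], v 0 * u 1, v 1 * u 0) := by
  simp [tqThree, tqCoord]

/-- The isomorphism at the other vertices. -/
noncomputable def tqOne (K : Type) [Field K] :
    TensorProduct K K K ≃ₗ[K] K × PUnit.{1} × PUnit.{1} :=
  (TensorProduct.lid K K).trans
    { toFun := fun x => (x, PUnit.unit, PUnit.unit)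
      invFun := fun p => p.1
      map_add' := fun _ _ => rfl
      map_smul' := fun _ _ => rfl
      left_inv := fun _ => rfl
      right_inv := fun _ => rfl }

lemma tqOne_tmul (K : Type) [Field K] (u v : K) :
    tqOne K (TensorProduct.tmul K u v) = (u * v, PUnit.unit, PUnit.unit) := by
  simp [tqOne]

/-- The family of isomorphisms. -/
noncomputable def tqIso (K : Type) [Field K] : ∀ x : TQV,
    TensorProduct K (TQWx K x) (TQWx K x) ≃ₗ[K] TQWx K x × TQSx K x × TQSx K x
  | .w1 => tqOne K
  | .w2 => tqOne K
  | .w3 => tqThree K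
  | .w4 => tqOne K

lemma tqArrow_a (K : Type) [Field K] (v : TensorProduct K K K) :
    tqThree K (TensorProduct.map (LinearMap.toSpanSingleton K (Fin 2 → K) (Pi.single 0 1))
      (LinearMap.toSpanSingleton K (Fin 2 → K) (Pi.single 0 1)) v) =
    (LinearMap.toSpanSingleton K (Fin 2 → K) (Pi.single 0 1)).prodMap
      ((0 : PUnit.{1} →ₗ[K] K).prodMap (0 : PUnit.{1} →ₗ[K] K)) (tqOne K v) := by
  induction v using TensorProduct.induction_on with
  | zero => simp only [map_zero]
  | add x y hx hy => simp only [map_add, hx, hy]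
  | tmul u v =>
    rw [TensorProduct.map_tmul, tqThree_tmul, tqOne_tmul]
    ext i
    · fin_cases i <;> simp [mul_comm]
    · simp
    · simp

lemma tqArrow_b (K : Type) [Field K] (v : TensorProduct K K K) :
    tqThree K (TensorProduct.map (LinearMap.toSpanSingleton K (Fin 2 → K) (Pi.single 1 1))
      (LinearMap.toSpanSingleton K (Fin 2 → K) (Pi.single 1 1)) v) =
    (LinearMap.toSpanSingleton K (Fin 2 → K) (Pi.single 1 1)).prodMap
      ((0 : PUnit.{1} →ₗ[K] K).prodMap (0 : PUnit.{1} →ₗ[K] K)) (tqOne K v) := by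
  induction v using TensorProduct.induction_on with
  | zero => simp only [map_zero]
  | add x y hx hy => simp only [map_add, hx, hy]
  | tmul u v =>
    rw [TensorProduct.map_tmul, tqThree_tmul, tqOne_tmul]
    ext i
    · fin_cases i <;> simp [mul_comm]
    · simp
    · simp

lemma tqArrow_c (K : Type) [Field K] (v : TensorProduct K (Fin 2 → K) (Fin 2 → K)) :
    tqOne K (TensorProduct.map
      ((LinearMap.proj 0 : (Fin 2 → K) →ₗ[K] K) + (LinearMap.proj 1 : (Fin 2 → K) →ₗ[K] K))
      ((LinearMap.proj 0 : (Fin 2 → K) →ₗ[K] K) + (LinearMap.proj 1 : (Fin 2 → K) →ₗ[K] K)) v) =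
    ((LinearMap.proj 0 : (Fin 2 → K) →ₗ[K] K) + (LinearMap.proj 1 : (Fin 2 → K) →ₗ[K] K)).prodMap
      ((0 : K →ₗ[K] PUnit.{1}).prodMap (0 : K →ₗ[K] PUnit.{1})) (tqThree K v) := by
  induction v using TensorProduct.induction_on with
  | zero => simp only [map_zero]
  | add x y hx hy => simp only [map_add, hx, hy]
  | tmul u v =>
    rw [TensorProduct.map_tmul, tqThree_tmul, tqOne_tmul]
    ext
    · simp
      ring

/-- for the quiver `1 → 3 ← 2`, `3 → 4` and the indecomposable representation
`W = (K, K, K², K; e₁, e₂, (1 1))`, there is an isomorphism of representations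
`W ⊗ W ≅ W ⊕ S₃ ⊕ S₃`. -/
theorem stmt_19 {K : Type} [Field K] :
    RepIso TQt TQh
      (fun x => TensorProduct K (TQWx K x) (TQWx K x))
      (fun ar => TensorProduct.map (TQWa K ar) (TQWa K ar))
      (fun x => TQWx K x × TQSx K x × TQSx K x)
      (fun ar => (TQWa K ar).prodMap ((TQSa K ar).prodMap (TQSa K ar))) := by
  refine ⟨tqIso K, fun ar => ?_⟩
  cases ar with
  | a => exact tqArrow_a K
  | b => exact tqArrow_b K
  | c => exact tqArrow_c K
end
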